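/- arXiv:2508.18838 — 2 statements merged into one kernel-verified Lean document; each statement's English description precedes it below -/
import Mathlib

section
/- Let d ≥ 1 and k ≥ 1, and let G = (V,E) be a graph with no isolated vertices whose edge set E is a k-fold R_d-circuit such that for every nonempty (k−1)-fold R_d-circuit B contained in E, the graph (V(B), B) is R_d-rigid. Then E is a balanced k-fold R_d-circuit. -/
open scoped BigOperators

/-- The row of the `d`-dimensional rigidity matrix of a realisation `p : V → ℝ^d`
indexed by the (unordered) edge `e`. -/
noncomputable def rigRow (d : ℕ) {V : Type*} [DecidableEq V]
    (p : V → Fin d → ℝ) (e : Sym2 V) : V × Fin d → ℝ :=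
  Sym2.lift
    ⟨fun u v wi =>
        (((if wi.1 = u then (1 : ℝ) else 0) - (if wi.1 = v then (1 : ℝ) else 0)) *
          (p u wi.2 - p v wi.2)),
      fun u v => by funext wi; ring⟩ e

/-- A realisation is generic if the coordinates of the points form an algebraically
independent set over `ℚ`. -/
def Generic (d : ℕ) {V : Type*} (p : V → Fin d → ℝ) : Prop :=
  AlgebraicIndependent ℚ fun vi : V × Fin d => p vi.1 vi.2

/-- `rrk d p F` : the rank of the set of rows of the rigidity matrix of `(K_V, p)`
indexed by the edges in `F`.  For generic `p` this is the rank function `r_d` of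
the generic `d`-dimensional rigidity matroid. -/
noncomputable def rrk (d : ℕ) {V : Type*} [Fintype V] [DecidableEq V]
    (p : V → Fin d → ℝ) (F : Set (Sym2 V)) : ℕ :=
  Module.finrank ℝ (Submodule.span ℝ (rigRow d p '' F))

/-- `D` is a `k`-fold circuit (with respect to the realisation `p`) :
`r (D \ {f}) = r D` for every `f ∈ D`, and `r D = |D| - k`. -/
def IsKFoldCircuit (d : ℕ) {V : Type*} [Fintype V] [DecidableEq V]
    (p : V → Fin d → ℝ) (D : Finset (Sym2 V)) (k : ℕ) : Prop :=
  (∀ f ∈ D, rrk d p (↑D \ {f}) = rrk d p ↑D) ∧ rrk d p ↑D + k = D.card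

/-- An `R_d`-circuit: `r C = |C| - 1` and `r (C \ {f}) = r C` for all `f ∈ C`. -/
def IsCircuit (d : ℕ) {V : Type*} [Fintype V] [DecidableEq V]
    (p : V → Fin d → ℝ) (C : Finset (Sym2 V)) : Prop :=
  IsKFoldCircuit d p C 1

/-- `A` is a part of the principal partition of the `k`-fold circuit `D`:
the parts are the sets `D \ B` where `B` runs over the `(k-1)`-fold circuits
contained in `D`. -/
def IsPrincipalPart (d : ℕ) {V : Type*} [Fintype V] [DecidableEq V]
    (p : V → Fin d → ℝ) (D : Finset (Sym2 V)) (k : ℕ) (A : Finset (Sym2 V)) : Prop :=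
  ∃ B ⊆ D, IsKFoldCircuit d p B (k - 1) ∧ A = D \ B

/-- Closure in the rigidity matroid: all edges of `K_V` whose addition to `F`
does not increase the rank. -/
def rcl (d : ℕ) {V : Type*} [Fintype V] [DecidableEq V]
    (p : V → Fin d → ℝ) (F : Set (Sym2 V)) : Set (Sym2 V) :=
  {e | ¬ e.IsDiag ∧ rrk d p (insert e F) = rrk d p F}

/-- A `k`-fold circuit `D` with principal partition `A_1, …, A_ℓ` is balanced if
`r_d (⋂ i, cl_d (D \ A_i)) = ℓ - k`. -/
def IsBalanced (d : ℕ) {V : Type*} [Fintype V] [DecidableEq V]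
    (p : V → Fin d → ℝ) (D : Finset (Sym2 V)) (k : ℕ) : Prop :=
  rrk d p (⋂ A ∈ {A | IsPrincipalPart d p D k A}, rcl d p ↑(D \ A)) + k =
    Set.ncard {A | IsPrincipalPart d p D k A}

/-- A vertex is monochromatic if all edges of `D` incident with it lie in a single
part of the principal partition (and technicolour otherwise). -/
def Monochromatic (d : ℕ) {V : Type*} [Fintype V] [DecidableEq V]
    (p : V → Fin d → ℝ) (D : Finset (Sym2 V)) (k : ℕ) (w : V) : Prop :=
  ∃ A, IsPrincipalPart d p D k A ∧ ∀ e ∈ D, w ∈ e → e ∈ A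

/-- The graph `(W, E)` is `R_d`-rigid: it is a complete graph on at most `d+1`
vertices, or `r_d(E) = d|W| - (d+1 choose 2)`. -/
def IsRigidOn (d : ℕ) {V : Type*} [Fintype V] [DecidableEq V]
    (p : V → Fin d → ℝ) (W : Finset V) (E : Finset (Sym2 V)) : Prop :=
  (W.card ≤ d + 1 ∧ ∀ u ∈ W, ∀ w ∈ W, u ≠ w → s(u, w) ∈ E) ∨
    (rrk d p ↑E : ℤ) + ((d + 1).choose 2 : ℤ) = (d : ℤ) * (W.card : ℤ)

/-- The edge set of the cone of (the graph with edge set) `D` over a new vertex,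
realised as `none : Option V`. -/
def coneEdges {V : Type*} [Fintype V] [DecidableEq V] (D : Finset (Sym2 V)) :
    Finset (Sym2 (Option V)) :=
  D.image (Sym2.map Option.some) ∪
    Finset.univ.image fun u : V => s((Option.some u : Option V), (none : Option V))

/-- The degree of the vertex `w` in the edge set `D`. -/
def degIn {V : Type*} [Fintype V] [DecidableEq V] (D : Finset (Sym2 V)) (w : V) : ℕ :=
  (D.filter fun e => w ∈ e).card

/-- The set of vertices incident with an edge of `F`. -/
def esupp {V : Type*} [Fintype V] [DecidableEq V] (F : Finset (Sym2 V)) : Finset V :=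
  Finset.univ.filter fun w => ∃ e ∈ F, w ∈ e

/-! In coordinates indexed by the elements of a `k`-fold circuit `D`, the intersection of the spans
of the sets `D \ A`, for `A` in the principal partition, pulls back to the space of vectors that
agree on each part with some stress of `D`. The stresses vanishing at one element of a part vanish
on the whole part, so such a vector is determined by one freely chosen value on each of the `ℓ`
parts; since the stresses themselves form a space of dimension `k`, the intersection has dimension
`ℓ - k`.

It remains to compare this intersection with the span of the intersected closures. For points in
general position, the rows of the complete graph on `W` span precisely the loads supported on `W`
that are orthogonal to all infinitesimal isometries. Hence a rigid graph on `W` spans the same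
space, and intersecting the load spaces over a family of vertex sets just intersects these sets. -/

open Module

section LinearAlgebra

variable {K : Type*} [Field K]

theorem finrank_map_add_finrank_inf_ker {X Y : Type*} [AddCommGroup X] [Module K X]
    [AddCommGroup Y] [Module K Y] (f : X →ₗ[K] Y) (L : Submodule K X) [FiniteDimensional K L] :
    finrank K (L.map f) + finrank K (L ⊓ LinearMap.ker f : Submodule K X) = finrank K L := by
  rw [← LinearMap.finrank_range_add_finrank_ker (f.domRestrict L), LinearMap.range_domRestrict,
    LinearMap.ker_domRestrict, ← Submodule.map_comap_subtype, Submodule.finrank_map_subtype_eq]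

theorem finrank_span_insert_eq_iff {M : Type*} [AddCommGroup M] [Module K M] {s : Set M}
    (hs : s.Finite) {x : M} :
    finrank K (Submodule.span K (insert x s)) = finrank K (Submodule.span K s) ↔
      x ∈ Submodule.span K s := by
  constructor
  · intro h
    have : FiniteDimensional K (Submodule.span K (insert x s)) :=
      FiniteDimensional.span_of_finite K (hs.insert x)
    rw [Submodule.eq_of_le_of_finrank_le (Submodule.span_mono (Set.subset_insert x s)) h.le]
    exact Submodule.subset_span (Set.mem_insert x s)
  · intro h
    rw [Submodule.span_insert_eq_span h]

theorem mem_span_iff_forall_dotProduct {n : Type*} [Fintype n] {S : Set (n → K)} {x : n → K} :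
    x ∈ Submodule.span K S ↔ ∀ h : n → K, (∀ s ∈ S, h ⬝ᵥ s = 0) → h ⬝ᵥ x = 0 := by
  classical
  constructor
  · intro hx h hS
    exact (Submodule.span_le (p := LinearMap.ker (dotProductEquiv K n h))).2 hS hx
  · contrapose!
    intro hx
    obtain ⟨f, hfx, hf⟩ := Submodule.exists_le_ker_of_notMem hx
    obtain ⟨h, rfl⟩ := (dotProductEquiv K n).surjective f
    exact ⟨h, fun s hs => hf (Submodule.subset_span hs), hfx⟩

theorem mulVec_surjective_of_linearIndependent_row {m n : Type*} [Finite m] [Fintype n]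
    {A : Matrix m n K} (hA : LinearIndependent K A.row) : Function.Surjective A.mulVec := by
  cases nonempty_fintype m
  have hrange : LinearMap.range A.mulVecLin = ⊤ :=
    Submodule.eq_top_of_finrank_eq (by rw [finrank_fintype_fun_eq_card]; exact hA.rank_matrix)
  exact LinearMap.range_eq_top.1 hrange

end LinearAlgebra

section Stress

variable (K : Type*) {α M : Type*} [Field K] [AddCommGroup M] [Module K M]

/-- The linear dependencies of the vectors `r e` supported on `F`. They are the stresses of a
framework when `r` lists the rows of its rigidity matrix. -/
noncomputable def stressSpace (r : α → M) (F : Set α) : Submodule K (α →₀ K) :=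
  Finsupp.supported K K F ⊓ LinearMap.ker (Finsupp.linearCombination K r)

/-- A `k`-fold circuit of the linear matroid represented by `r`, described through stresses: no
element of `D` is a coloop, and `D` has nullity `k`. -/
structure IsStressCircuit (r : α → M) (D : Finset α) (k : ℕ) : Prop where
  exists_apply_ne_zero : ∀ e ∈ D, ∃ s ∈ stressSpace K r D, s e ≠ 0
  finrank_stressSpace : finrank K (stressSpace K r D) = k

open Classical in
/-- The elements of `D` in series with `e`: a stress of `D` vanishes at one of them if and only if
it vanishes at `e`. -/
noncomputable def seriesClass (r : α → M) (D : Finset α) (e : α) : Finset α :=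
  D.filter fun f => ∀ s ∈ stressSpace K r D, s f = 0 ↔ s e = 0

open Classical in
/-- The partition of `D` into series classes. It is the principal partition when `D` is a `k`-fold
circuit with `k ≥ 1`. -/
noncomputable def seriesPartition (r : α → M) (D : Finset α) : Finset (Finset α) :=
  D.image (seriesClass K r D)

variable {K} {r : α → M} {D : Finset α} {k : ℕ}

theorem stressSpace_mono {F G : Set α} (h : F ⊆ G) : stressSpace K r F ≤ stressSpace K r G :=
  inf_le_inf_right _ (Finsupp.supported_mono h)

theorem apply_eq_zero_of_mem_stressSpace {F : Set α} {s : α →₀ K} (hs : s ∈ stressSpace K r F)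
    {e : α} (he : e ∉ F) : s e = 0 :=
  (Finsupp.mem_supported' K s).1 hs.1 e he

theorem mem_stressSpace_of_subset {F G : Set α} {s : α →₀ K} (hs : s ∈ stressSpace K r G)
    (h : ∀ e ∈ G, e ∉ F → s e = 0) : s ∈ stressSpace K r F := by
  refine ⟨(Finsupp.mem_supported' K s).2 fun e he => ?_, hs.2⟩
  by_cases heG : e ∈ G
  · exact h e heG he
  · exact apply_eq_zero_of_mem_stressSpace hs heG

instance finiteDimensional_supported (D : Finset α) :
    FiniteDimensional K (Finsupp.supported K K (D : Set α)) :=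
  (Finsupp.supportedEquivFinsupp (M := K) (R := K) (D : Set α)).symm.finiteDimensional

instance finiteDimensional_stressSpace (D : Finset α) :
    FiniteDimensional K (stressSpace K r (D : Set α)) :=
  Submodule.finiteDimensional_inf_left _ _

theorem finrank_span_image_add_finrank_stressSpace (r : α → M) (D : Finset α) :
    finrank K (Submodule.span K (r '' (D : Set α))) + finrank K (stressSpace K r (D : Set α)) =
      D.card := by
  rw [Finsupp.span_image_eq_map_linearCombination, stressSpace, finrank_map_add_finrank_inf_ker,
    (Finsupp.supportedEquivFinsupp (M := K) (R := K) (D : Set α)).finrank_eq]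
  simp

theorem linearCombination_mem_span_image_sdiff_iff {F A : Set α} {c : α →₀ K}
    (hc : c ∈ Finsupp.supported K K F) :
    Finsupp.linearCombination K r c ∈ Submodule.span K (r '' (F \ A)) ↔
      ∃ s ∈ stressSpace K r F, Set.EqOn c s A := by
  rw [Finsupp.mem_span_image_iff_linearCombination]
  constructor
  · rintro ⟨l, hl, hlc⟩
    refine ⟨c - l, ⟨sub_mem hc (Finsupp.supported_mono Set.sdiff_subset hl), ?_⟩, fun f hf => ?_⟩
    · simp [hlc]
    · simp [(Finsupp.mem_supported' K l).1 hl f fun h => h.2 hf]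
  · rintro ⟨s, hs, hcs⟩
    refine ⟨c - s, (Finsupp.mem_supported' K _).2 fun f hf => ?_, ?_⟩
    · by_cases hfF : f ∈ F
      · have hfA : f ∈ A := by_contra fun h => hf ⟨hfF, h⟩
        simp [hcs hfA]
      · simp [(Finsupp.mem_supported' K _).1 (sub_mem hc hs.1) f hfF]
    · rw [map_sub, LinearMap.mem_ker.1 hs.2, sub_zero]

theorem mem_span_image_sdiff_singleton_iff {F : Set α} {e : α} (he : e ∈ F) :
    r e ∈ Submodule.span K (r '' (F \ {e})) ↔ ∃ s ∈ stressSpace K r F, s e ≠ 0 := by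
  have h := linearCombination_mem_span_image_sdiff_iff (r := r) (A := {e})
    (Finsupp.single_mem_supported K (1 : K) he)
  rw [Finsupp.linearCombination_single, one_smul] at h
  rw [h]
  simp only [Set.eqOn_singleton, Finsupp.single_eq_same]
  constructor
  · rintro ⟨s, hs, hse⟩
    exact ⟨s, hs, hse ▸ one_ne_zero⟩
  · rintro ⟨s, hs, hse⟩
    exact ⟨(s e)⁻¹ • s, Submodule.smul_mem _ _ hs, by simp [hse]⟩

theorem finrank_span_image_sdiff_singleton_eq_iff {e : α} (he : e ∈ D) :
    finrank K (Submodule.span K (r '' ((D : Set α) \ {e}))) =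
      finrank K (Submodule.span K (r '' (D : Set α))) ↔
        ∃ s ∈ stressSpace K r (D : Set α), s e ≠ 0 := by
  rw [← mem_span_image_sdiff_singleton_iff (Finset.mem_coe.2 he),
    ← finrank_span_insert_eq_iff (D.finite_toSet.sdiff.image r), ← Set.image_insert_eq,
    Set.insert_sdiff_self_of_mem (Finset.mem_coe.2 he), eq_comm]

theorem IsStressCircuit.nonempty (hD : IsStressCircuit K r D (k + 1)) : D.Nonempty := by
  rw [← Finset.card_pos, ← finrank_span_image_add_finrank_stressSpace (K := K) r D,
    hD.finrank_stressSpace]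
  omega

theorem mem_seriesClass {e f : α} : f ∈ seriesClass K r D e ↔
    f ∈ D ∧ ∀ s ∈ stressSpace K r (D : Set α), s f = 0 ↔ s e = 0 := by
  simp [seriesClass]

theorem mem_seriesClass_self {e : α} (he : e ∈ D) : e ∈ seriesClass K r D e :=
  mem_seriesClass.2 ⟨he, fun _ _ => Iff.rfl⟩

theorem seriesClass_subset (e : α) : seriesClass K r D e ⊆ D :=
  fun _ hf => (mem_seriesClass.1 hf).1

theorem seriesClass_eq_of_mem {e f : α} (hf : f ∈ seriesClass K r D e) :
    seriesClass K r D f = seriesClass K r D e := by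
  ext g
  simp only [mem_seriesClass]
  exact and_congr_right fun _ => forall₂_congr fun s hs => by rw [(mem_seriesClass.1 hf).2 s hs]

theorem mem_seriesPartition {A : Finset α} :
    A ∈ seriesPartition K r D ↔ ∃ e ∈ D, seriesClass K r D e = A := by
  simp [seriesPartition]

variable [DecidableEq α]

theorem finrank_stressSpace_erase_add_one {e : α} (he : e ∈ D)
    (hse : ∃ s ∈ stressSpace K r (D : Set α), s e ≠ 0) :
    finrank K (stressSpace K r (D.erase e : Set α)) + 1 =
      finrank K (stressSpace K r (D : Set α)) := by
  have hrank := (finrank_span_image_sdiff_singleton_eq_iff he).2 hse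
  have hD := finrank_span_image_add_finrank_stressSpace (K := K) r D
  have hDe := finrank_span_image_add_finrank_stressSpace (K := K) r (D.erase e)
  have hcard := Finset.card_erase_add_one he
  rw [← Finset.coe_erase] at hrank
  omega

theorem mem_stressSpace_erase {e : α} {s : α →₀ K} :
    s ∈ stressSpace K r (D.erase e : Set α) ↔ s ∈ stressSpace K r (D : Set α) ∧ s e = 0 := by
  constructor
  · intro hs
    exact ⟨stressSpace_mono (Finset.coe_subset.2 (D.erase_subset e)) hs,
      apply_eq_zero_of_mem_stressSpace hs (by simp)⟩
  · rintro ⟨hs, hse⟩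
    refine mem_stressSpace_of_subset hs fun f hfD hf => ?_
    obtain rfl : f = e := by simpa [Finset.mem_coe.1 hfD] using hf
    exact hse

theorem stressSpace_sdiff_seriesClass {e : α} (he : e ∈ D) :
    stressSpace K r (D \ seriesClass K r D e : Finset α) =
      stressSpace K r (D.erase e : Set α) := by
  apply le_antisymm
  · apply stressSpace_mono
    intro f hf
    have hne : f ≠ e := by
      rintro rfl
      simp [mem_seriesClass_self he] at hf
    simp_all
  · intro s hs
    obtain ⟨hsD, hse⟩ := mem_stressSpace_erase.1 hs
    refine mem_stressSpace_of_subset hsD fun f hfD hf => ?_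
    have hfA : f ∈ seriesClass K r D e := by simpa [Finset.mem_coe.1 hfD] using hf
    exact ((mem_seriesClass.1 hfA).2 s hsD).2 hse

theorem mem_seriesClass_of_stressSpace_erase_le
    (hD : ∀ e ∈ D, ∃ s ∈ stressSpace K r (D : Set α), s e ≠ 0) {e f : α} (he : e ∈ D) (hf : f ∈ D)
    (h : stressSpace K r (D.erase e : Set α) ≤ stressSpace K r (D.erase f : Set α)) :
    f ∈ seriesClass K r D e := by
  have hdim_e := finrank_stressSpace_erase_add_one he (hD e he)
  have hdim_f := finrank_stressSpace_erase_add_one hf (hD f hf)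
  have heq := Submodule.eq_of_le_of_finrank_le h (by omega)
  refine mem_seriesClass.2 ⟨hf, fun s hs => ?_⟩
  have hiff := SetLike.ext_iff.1 heq s
  simp only [mem_stressSpace_erase, hs, true_and] at hiff
  exact hiff.symm

namespace IsStressCircuit

theorem finrank_stressSpace_erase (hD : IsStressCircuit K r D (k + 1)) {e : α} (he : e ∈ D) :
    finrank K (stressSpace K r (D.erase e : Set α)) = k := by
  have h := finrank_stressSpace_erase_add_one he (hD.exists_apply_ne_zero e he)
  rw [hD.finrank_stressSpace] at h
  omega

theorem sdiff_seriesClass (hD : IsStressCircuit K r D (k + 1)) {e : α} (he : e ∈ D) :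
    IsStressCircuit K r (D \ seriesClass K r D e) k := by
  constructor
  · intro f hf
    rw [Finset.mem_sdiff] at hf
    have hnle : ¬ stressSpace K r (D.erase e : Set α) ≤ stressSpace K r (D.erase f : Set α) :=
      fun h => hf.2 (mem_seriesClass_of_stressSpace_erase_le hD.exists_apply_ne_zero he hf.1 h)
    obtain ⟨s, hs, hsf⟩ := SetLike.not_le_iff_exists.1 hnle
    rw [stressSpace_sdiff_seriesClass he]
    exact ⟨s, hs, fun h => hsf (mem_stressSpace_erase.2 ⟨(mem_stressSpace_erase.1 hs).1, h⟩)⟩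
  · rw [stressSpace_sdiff_seriesClass he, hD.finrank_stressSpace_erase he]

theorem sdiff_mem_seriesPartition (hD : IsStressCircuit K r D (k + 1)) {B : Finset α} (hBD : B ⊆ D)
    (hB : IsStressCircuit K r B k) : D \ B ∈ seriesPartition K r D := by
  have herase {e : α} (he : e ∈ D \ B) :
      stressSpace K r (B : Set α) = stressSpace K r (D.erase e : Set α) := by
    rw [Finset.mem_sdiff] at he
    refine Submodule.eq_of_le_of_finrank_le
      (stressSpace_mono (Finset.coe_subset.2 (Finset.subset_erase.2 ⟨hBD, he.2⟩))) ?_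
    rw [hD.finrank_stressSpace_erase he.1, hB.finrank_stressSpace]
  obtain ⟨e, he⟩ : (D \ B).Nonempty := by
    rw [Finset.sdiff_nonempty]
    intro hDB
    have := hB.finrank_stressSpace
    rw [hBD.antisymm hDB, hD.finrank_stressSpace] at this
    omega
  have heD := (Finset.mem_sdiff.1 he).1
  refine mem_seriesPartition.2 ⟨e, heD, Finset.Subset.antisymm (fun f hf => ?_) fun f hf => ?_⟩
  · refine Finset.mem_sdiff.2 ⟨seriesClass_subset e hf, fun hfB => ?_⟩
    obtain ⟨s, hs, hsf⟩ := hB.exists_apply_ne_zero f hfB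
    obtain ⟨hsD, hse⟩ := mem_stressSpace_erase.1 (herase he ▸ hs)
    exact hsf (((mem_seriesClass.1 hf).2 s hsD).2 hse)
  · exact mem_seriesClass_of_stressSpace_erase_le hD.exists_apply_ne_zero heD
      (Finset.mem_sdiff.1 hf).1 ((herase he).symm.trans (herase hf)).le

theorem exists_sdiff_eq_iff_mem_seriesPartition (hD : IsStressCircuit K r D (k + 1))
    {A : Finset α} :
    (∃ B ⊆ D, IsStressCircuit K r B k ∧ A = D \ B) ↔ A ∈ seriesPartition K r D := by
  constructor
  · rintro ⟨B, hBD, hB, rfl⟩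
    exact hD.sdiff_mem_seriesPartition hBD hB
  · intro hA
    obtain ⟨e, he, rfl⟩ := mem_seriesPartition.1 hA
    exact ⟨D \ seriesClass K r D e, Finset.sdiff_subset, hD.sdiff_seriesClass he,
      (Finset.sdiff_sdiff_eq_self (seriesClass_subset e)).symm⟩

end IsStressCircuit

variable (K r D) in
/-- The vectors supported on `D` that agree on each series class with a stress of `D`, which may
depend on the class. -/
noncomputable def piecewiseStressSpace : Submodule K (α →₀ K) :=
  Finsupp.supported K K (D : Set α) ⊓
    (⨅ A ∈ seriesPartition K r D, Submodule.span K (r '' (D \ A : Finset α))).comap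
      (Finsupp.linearCombination K r)

theorem mem_piecewiseStressSpace {c : α →₀ K} :
    c ∈ piecewiseStressSpace K r D ↔ c ∈ Finsupp.supported K K (D : Set α) ∧
      ∀ A ∈ seriesPartition K r D, ∃ s ∈ stressSpace K r (D : Set α), Set.EqOn c s A := by
  simp only [piecewiseStressSpace, Submodule.mem_inf, Submodule.mem_comap, Submodule.mem_iInf,
    Finset.coe_sdiff]
  exact and_congr_right fun hc =>
    forall₂_congr fun A _ => linearCombination_mem_span_image_sdiff_iff hc

theorem exists_mem_piecewiseStressSpace_eqOn
    (s : seriesPartition K r D → stressSpace K r (D : Set α)) :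
    ∃ c ∈ piecewiseStressSpace K r D, ∀ A : seriesPartition K r D, Set.EqOn c (s A).1 A := by
  have hpart {f : α} (hf : f ∈ D) : seriesClass K r D f ∈ seriesPartition K r D :=
    mem_seriesPartition.2 ⟨f, hf, rfl⟩
  let c : α →₀ K := Finsupp.indicator D fun f hf => (s ⟨_, hpart hf⟩).1 f
  have hc (A : seriesPartition K r D) : Set.EqOn c (s A).1 A := by
    intro f hfA
    obtain ⟨e, he, heA⟩ := mem_seriesPartition.1 A.2
    rw [← heA, Finset.mem_coe] at hfA
    have hfD := seriesClass_subset e hfA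
    have hA : (⟨_, hpart hfD⟩ : seriesPartition K r D) = A :=
      Subtype.ext ((seriesClass_eq_of_mem hfA).trans heA)
    simp only [c, Finsupp.indicator_of_mem hfD, hA]
  refine ⟨c, mem_piecewiseStressSpace.2 ⟨?_, fun A hA => ⟨_, (s ⟨A, hA⟩).2, hc ⟨A, hA⟩⟩⟩, hc⟩
  exact (Finsupp.mem_supported' K c).2 fun f hf => Finsupp.indicator_of_notMem hf _

theorem eq_zero_of_mem_piecewiseStressSpace {c : α →₀ K} (hc : c ∈ piecewiseStressSpace K r D)
    (h : ∀ A ∈ seriesPartition K r D, ∃ e ∈ A, c e = 0) : c = 0 := by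
  obtain ⟨hcD, hcs⟩ := mem_piecewiseStressSpace.1 hc
  refine Finsupp.ext fun f => ?_
  by_cases hf : f ∈ D
  · have hA : seriesClass K r D f ∈ seriesPartition K r D := mem_seriesPartition.2 ⟨f, hf, rfl⟩
    obtain ⟨e, he, hce⟩ := h _ hA
    obtain ⟨s, hs, hcs_eq⟩ := hcs _ hA
    rw [hcs_eq he, (mem_seriesClass.1 he).2 s hs] at hce
    exact (hcs_eq (mem_seriesClass_self hf)).trans hce
  · exact (Finsupp.mem_supported' K _).1 hcD f hf

theorem finrank_piecewiseStressSpace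
    (hD : ∀ e ∈ D, ∃ s ∈ stressSpace K r (D : Set α), s e ≠ 0) :
    finrank K (piecewiseStressSpace K r D) = (seriesPartition K r D).card := by
  choose rep hrepD hrep using fun A : seriesPartition K r D => mem_seriesPartition.1 A.2
  have hrepA (A : seriesPartition K r D) : rep A ∈ A.1 := by
    simpa only [hrep] using mem_seriesClass_self (K := K) (r := r) (hrepD A)
  let eval : piecewiseStressSpace K r D →ₗ[K] (seriesPartition K r D → K) :=
    LinearMap.pi fun A => Finsupp.lapply (rep A) ∘ₗ Submodule.subtype _
  have hinj : Function.Injective eval := fun c c' h => Subtype.ext <| sub_eq_zero.1 <|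
    eq_zero_of_mem_piecewiseStressSpace (sub_mem c.2 c'.2) fun A hA =>
      ⟨rep ⟨A, hA⟩, hrepA ⟨A, hA⟩, sub_eq_zero.2 (congrFun h ⟨A, hA⟩)⟩
  have hsurj : Function.Surjective eval := by
    intro a
    have hex (A : seriesPartition K r D) :
        ∃ s : stressSpace K r (D : Set α), s.1 (rep A) = a A := by
      obtain ⟨s, hs, hne⟩ := hD _ (hrepD A)
      exact ⟨(a A / s (rep A)) • ⟨s, hs⟩, by simp [hne]⟩
    choose s hsa using hex
    obtain ⟨c, hc, hcs⟩ := exists_mem_piecewiseStressSpace_eqOn s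
    exact ⟨⟨c, hc⟩, funext fun A => (hcs A (hrepA A)).trans (hsa A)⟩
  rw [(LinearEquiv.ofBijective eval ⟨hinj, hsurj⟩).finrank_eq, finrank_fintype_fun_eq_card,
    Fintype.card_coe]

theorem IsStressCircuit.finrank_iInf_span_sdiff_add (hD : IsStressCircuit K r D (k + 1)) :
    finrank K (⨅ A ∈ seriesPartition K r D, Submodule.span K (r '' (D \ A : Finset α)) :
      Submodule K M) + (k + 1) = (seriesPartition K r D).card := by
  set X := ⨅ A ∈ seriesPartition K r D, Submodule.span K (r '' (D \ A : Finset α))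
  have hle_span : X ≤ (Finsupp.supported K K (D : Set α)).map (Finsupp.linearCombination K r) := by
    obtain ⟨e, he⟩ := hD.nonempty
    rw [← Finsupp.span_image_eq_map_linearCombination]
    exact (iInf₂_le _ (mem_seriesPartition.2 ⟨e, he, rfl⟩)).trans
      (Submodule.span_mono (Set.image_mono (by simp)))
  have hmap : (piecewiseStressSpace K r D).map (Finsupp.linearCombination K r) = X := by
    apply SetLike.coe_injective
    rw [piecewiseStressSpace, Submodule.map_coe, Submodule.coe_inf, Submodule.comap_coe,
      Set.image_inter_preimage, ← Submodule.map_coe, ← Submodule.coe_inf, inf_eq_right.2 hle_span]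
  have hker : piecewiseStressSpace K r D ⊓ LinearMap.ker (Finsupp.linearCombination K r) =
      stressSpace K r (D : Set α) := by
    rw [piecewiseStressSpace, inf_assoc, inf_eq_right.2 (LinearMap.ker_le_comap _), stressSpace]
  have : FiniteDimensional K (piecewiseStressSpace K r D) :=
    Submodule.finiteDimensional_inf_left _ _
  rw [← finrank_piecewiseStressSpace hD.exists_apply_ne_zero,
    ← finrank_map_add_finrank_inf_ker (Finsupp.linearCombination K r), hmap, hker,
    hD.finrank_stressSpace]

end Stress

section GeneralPosition

variable {d : ℕ} {V : Type*}

/-- The points of `p` are in general position in `ℝ^d`: any at most `d + 1` of them are affinely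
independent. -/
def IsGeneralPosition (p : V → Fin d → ℝ) : Prop :=
  ∀ s : Finset V, s.card ≤ d + 1 → AffineIndependent ℝ fun v : s => p v

theorem Generic.linearIndependent_sub {p : V → Fin d → ℝ} (hp : Generic d p) {ι : Type*}
    [Fintype ι] (hι : Fintype.card ι ≤ d) {f : ι → V} (hf : Function.Injective f) {v : V}
    (hv : ∀ i, f i ≠ v) : LinearIndependent ℝ fun i => p (f i) - p v := by
  classical
  obtain ⟨e⟩ : Nonempty (ι ↪ Fin d) := Function.Embedding.nonempty_of_card_le (by simpa using hι)
  let A : Matrix ι ι (MvPolynomial (V × Fin d) ℚ) :=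
    .of fun i j => MvPolynomial.X (f i, e j) - MvPolynomial.X (v, e j)
  -- Placing `v` at the origin and the points `f i` at distinct unit vectors turns `A` into `1`.
  have hA : A.det ≠ 0 := by
    let q : V × Fin d → ℚ := fun x => if ∃ i, f i = x.1 ∧ e i = x.2 then 1 else 0
    have hone : (MvPolynomial.aeval q).mapMatrix A = 1 := by
      ext i j
      simp [A, q, hv, hf.eq_iff, Matrix.one_apply]
    intro h
    simpa [AlgHom.map_det, hone] using congrArg (MvPolynomial.aeval q) h
  have hdet := (map_ne_zero_iff (MvPolynomial.aeval fun x : V × Fin d => p x.1 x.2) hp).2 hA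
  rw [AlgHom.map_det] at hdet
  have hrow : (fun i => (MvPolynomial.aeval fun x : V × Fin d => p x.1 x.2).mapMatrix A i) =
      LinearMap.funLeft ℝ ℝ e ∘ fun i => p (f i) - p v := by
    ext i j
    simp [A, LinearMap.funLeft_apply]
  have hli := Matrix.linearIndependent_rows_of_det_ne_zero hdet
  rw [hrow] at hli
  exact hli.of_comp (LinearMap.funLeft ℝ ℝ e)

theorem Generic.isGeneralPosition {p : V → Fin d → ℝ} (hp : Generic d p) :
    IsGeneralPosition p := by
  classical
  intro s hs
  rcases isEmpty_or_nonempty s with _ | ⟨⟨v⟩⟩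
  · exact affineIndependent_of_subsingleton ℝ _
  · refine (affineIndependent_iff_linearIndependent_vsub ℝ _ v).2 ?_
    refine hp.linearIndependent_sub ?_ (f := fun i : {w : s // w ≠ v} => (i : V))
      (Subtype.val_injective.comp Subtype.val_injective) fun i h => i.2 (Subtype.ext h)
    rw [Fintype.card_subtype_compl, Fintype.card_coe, Fintype.card_subtype_eq]
    omega

variable {p : V → Fin d → ℝ}

namespace IsGeneralPosition

theorem linearIndependent_sub (hp : IsGeneralPosition p) {W : Finset V} (hW : W.card ≤ d) {v : V}
    (hv : v ∉ W) : LinearIndependent ℝ fun w : W => p w - p v := by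
  classical
  have hcard : (insert v W).card ≤ d + 1 := (Finset.card_insert_le v W).trans (by omega)
  have hli := (affineIndependent_iff_linearIndependent_vsub ℝ _
    (⟨v, Finset.mem_insert_self v W⟩ : (insert v W : Finset V))).1 (hp _ hcard)
  let incl (w : W) : {x : (insert v W : Finset V) // x ≠ ⟨v, Finset.mem_insert_self v W⟩} :=
    ⟨⟨w, Finset.mem_insert_of_mem w.2⟩,
      fun h => ne_of_mem_of_not_mem w.2 hv (congrArg Subtype.val h)⟩
  exact hli.comp incl fun a b h => Subtype.ext (congrArg (fun x => (x.1 : V)) h)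

theorem exists_dotProduct_sub_eq (hp : IsGeneralPosition p) {W : Finset V} (hW : W.card ≤ d) {v : V}
    (hv : v ∉ W) (a : V → ℝ) : ∃ g : Fin d → ℝ, ∀ w ∈ W, g ⬝ᵥ (p w - p v) = a w := by
  obtain ⟨g, hg⟩ := mulVec_surjective_of_linearIndependent_row
    (A := .of fun w : W => p w - p v) (hp.linearIndependent_sub hW hv) fun w => a w
  exact ⟨g, fun w hw => (dotProduct_comm _ _).trans (congrFun hg ⟨w, hw⟩)⟩

theorem eq_zero_of_forall_dotProduct_sub_eq_zero (hp : IsGeneralPosition p) {W : Finset V}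
    (hW : d ≤ W.card) {v : V} (hv : v ∉ W) {h : Fin d → ℝ}
    (hh : ∀ w ∈ W, h ⬝ᵥ (p w - p v) = 0) : h = 0 := by
  obtain ⟨W₀, hW₀, hcard⟩ := Finset.exists_subset_card_eq hW
  have hli := hp.linearIndependent_sub hcard.le fun hv₀ => hv (hW₀ hv₀)
  have hspan := hli.span_eq_top_of_card_eq_finrank' (by simp [hcard])
  have hmem : h ∈ Submodule.span ℝ (Set.range fun w : W₀ => p w - p v) := by simp [hspan]
  refine dotProduct_self_eq_zero.1 (mem_span_iff_forall_dotProduct.1 hmem h ?_)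
  rintro _ ⟨w, rfl⟩
  exact hh w (hW₀ w.2)

end IsGeneralPosition

end GeneralPosition

section Loads

variable {d : ℕ} {V : Type*}

/-- An infinitesimal isometry of `ℝ^d`, as a velocity field that preserves all distances to first
order. -/
def IsInfinitesimalIsometry (t : (Fin d → ℝ) → Fin d → ℝ) : Prop :=
  ∀ x y, (t x - t y) ⬝ᵥ (x - y) = 0

/-- If `W` has at most `d` points, choose `g` so that the affine function
`y ↦ 1 + g ⬝ᵥ (y - p v)` vanishes on `W`; the isometry scales `h` by this function and subtracts
the multiple of `g` that makes it skew. Otherwise `h = 0`. -/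
theorem IsGeneralPosition.exists_isInfinitesimalIsometry {p : V → Fin d → ℝ}
    (hp : IsGeneralPosition p) {W : Finset V} {v : V} (hv : v ∉ W) {h : Fin d → ℝ}
    (hh : ∀ w ∈ W, h ⬝ᵥ (p w - p v) = 0) :
    ∃ t, IsInfinitesimalIsometry t ∧ t (p v) = h ∧ ∀ w ∈ W, t (p w) = 0 := by
  rcases le_total W.card d with hW | hW
  · obtain ⟨g, hg⟩ := hp.exists_dotProduct_sub_eq hW hv fun _ => -1
    refine ⟨fun y => (1 + g ⬝ᵥ (y - p v)) • h - (h ⬝ᵥ (y - p v)) • g, fun x y => ?_, ?_, ?_⟩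
    · simp only [sub_dotProduct, smul_dotProduct, dotProduct_sub, smul_eq_mul]
      ring
    · simp
    · intro w hw
      simp [hg w hw, hh w hw]
  · rw [hp.eq_zero_of_forall_dotProduct_sub_eq_zero hW hv hh]
    exact ⟨0, fun x y => by simp, rfl, fun _ _ => rfl⟩

/-- The equilibrium loads on `W`: assignments of forces to the points of `p`, vanishing outside `W`,
that do no work along any infinitesimal isometry of `ℝ^d`. -/
def equilibriumLoads [Fintype V] (p : V → Fin d → ℝ) (W : Set V) :
    Submodule ℝ (V × Fin d → ℝ) where
  carrier := {x | (∀ v ∉ W, ∀ i, x (v, i) = 0) ∧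
    ∀ t, IsInfinitesimalIsometry t → Function.uncurry (fun v => t (p v)) ⬝ᵥ x = 0}
  add_mem' hx hy :=
    ⟨fun v hv i => by simp [hx.1 v hv i, hy.1 v hv i],
      fun t ht => by rw [dotProduct_add, hx.2 t ht, hy.2 t ht, add_zero]⟩
  zero_mem' := ⟨fun _ _ _ => rfl, fun _ _ => dotProduct_zero _⟩
  smul_mem' c x hx :=
    ⟨fun v hv i => by simp [hx.1 v hv i],
      fun t ht => by rw [dotProduct_smul, hx.2 t ht, smul_zero]⟩

variable [Fintype V] {p : V → Fin d → ℝ}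

theorem mem_equilibriumLoads {W : Set V} {x : V × Fin d → ℝ} :
    x ∈ equilibriumLoads p W ↔ (∀ v ∉ W, ∀ i, x (v, i) = 0) ∧
      ∀ t, IsInfinitesimalIsometry t → Function.uncurry (fun v => t (p v)) ⬝ᵥ x = 0 :=
  Iff.rfl

theorem mem_equilibriumLoads_of_superset {W W' : Set V} {x : V × Fin d → ℝ}
    (hx : x ∈ equilibriumLoads p W') (h : ∀ v ∈ W', v ∉ W → ∀ i, x (v, i) = 0) :
    x ∈ equilibriumLoads p W := by
  refine ⟨fun v hv => ?_, hx.2⟩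
  by_cases hv' : v ∈ W'
  · exact h v hv' hv
  · exact hx.1 v hv'

theorem equilibriumLoads_empty : equilibriumLoads p ∅ = ⊥ :=
  (Submodule.eq_bot_iff _).2 fun _ hx => funext fun vi => hx.1 vi.1 (Set.notMem_empty _) vi.2

theorem equilibriumLoads_biInter {ι : Type*} {S : Set ι} (hS : S.Nonempty) (W : ι → Set V) :
    equilibriumLoads p (⋂ i ∈ S, W i) = ⨅ i ∈ S, equilibriumLoads p (W i) := by
  ext x
  simp only [Submodule.mem_iInf, mem_equilibriumLoads]
  constructor
  · rintro ⟨hsupp, hwork⟩ i hi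
    exact ⟨fun v hv => hsupp v fun h => hv (Set.mem_iInter₂.1 h i hi), hwork⟩
  · intro h
    obtain ⟨i₀, hi₀⟩ := hS
    refine ⟨fun v hv => ?_, (h i₀ hi₀).2⟩
    obtain ⟨i, hi, hvi⟩ : ∃ i ∈ S, v ∉ W i := by simpa using hv
    exact (h i hi).1 v hvi

theorem uncurry_dotProduct_eq_sum (m : V → Fin d → ℝ) (x : V × Fin d → ℝ) :
    Function.uncurry m ⬝ᵥ x = ∑ v, m v ⬝ᵥ Function.curry x v := by
  simp [dotProduct, Fintype.sum_prod_type]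

theorem IsGeneralPosition.curry_mem_span_of_mem_equilibriumLoads (hp : IsGeneralPosition p)
    {W : Finset V} {v : V} (hv : v ∉ W) {x : V × Fin d → ℝ}
    (hx : x ∈ equilibriumLoads p (insert v (W : Set V))) :
    Function.curry x v ∈ Submodule.span ℝ ((fun w => p w - p v) '' (W : Set V)) := by
  refine mem_span_iff_forall_dotProduct.2 fun h hh => ?_
  obtain ⟨t, ht, htv, htW⟩ := hp.exists_isInfinitesimalIsometry hv
    fun w hw => hh _ (Set.mem_image_of_mem _ hw)
  rw [← htv, ← hx.2 t ht, uncurry_dotProduct_eq_sum, eq_comm]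
  refine Finset.sum_eq_single_of_mem v (Finset.mem_univ v) fun w _ hwv => ?_
  by_cases hw : w ∈ W
  · rw [htW w hw, zero_dotProduct]
  · have hxw : Function.curry x w = 0 := funext (hx.1 w (by simp [hwv, hw]))
    rw [hxw, dotProduct_zero]

end Loads

section CompleteEdges

variable {V : Type*}

/-- The edges of the complete graph on `W`. -/
def completeEdges (W : Set V) : Set (Sym2 V) :=
  {e | ¬ e.IsDiag ∧ ∀ v ∈ e, v ∈ W}

theorem mk_mem_completeEdges {W : Set V} {u v : V} :
    s(u, v) ∈ completeEdges W ↔ u ≠ v ∧ u ∈ W ∧ v ∈ W := by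
  simp [completeEdges]

theorem completeEdges_mono {W W' : Set V} (h : W ⊆ W') : completeEdges W ⊆ completeEdges W' :=
  fun _ he => ⟨he.1, fun v hv => h (he.2 v hv)⟩

theorem ncard_completeEdges_le (W : Finset V) :
    (completeEdges (W : Set V)).ncard ≤ W.card.choose 2 := by
  classical
  rw [← Sym2.card_image_offDiag, ← Set.ncard_coe_finset]
  refine Set.ncard_le_ncard ?_ (Finset.finite_toSet _)
  intro e he
  induction e with
  | _ u v =>
    obtain ⟨huv, hu, hv⟩ := mk_mem_completeEdges.1 he
    exact Finset.mem_coe.2 (Finset.mem_image.2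
      ⟨(u, v), Finset.mem_offDiag.2 ⟨hu, hv, huv⟩, rfl⟩)

end CompleteEdges

section RigidityRows

variable {d : ℕ} {V : Type*} [DecidableEq V] {p : V → Fin d → ℝ}

theorem rigRow_apply_of_notMem {e : Sym2 V} {v : V} (hv : v ∉ e) (i : Fin d) :
    rigRow d p e (v, i) = 0 := by
  induction e with
  | _ a b =>
    rw [Sym2.mem_iff, not_or] at hv
    simp [rigRow, hv]

theorem exists_mem_span_rigRow_curry_eq {W : Set V} {v : V} (hv : v ∉ W) {f : Fin d → ℝ}
    (hf : f ∈ Submodule.span ℝ ((fun w => p w - p v) '' W)) :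
    ∃ y ∈ Submodule.span ℝ (rigRow d p '' completeEdges (insert v W)), Function.curry y v = f := by
  have hedge {w : V} (hw : w ∈ W) : s(v, w) ∈ completeEdges (insert v W) :=
    mk_mem_completeEdges.2 ⟨fun h => hv (h ▸ hw), Set.mem_insert v W, Set.mem_insert_of_mem v hw⟩
  have hrow {w : V} (hw : w ∈ W) :
      Function.curry (rigRow d p s(v, w)) v = -(p w - p v) := by
    have hwv : v ≠ w := fun h => hv (h ▸ hw)
    ext i
    simp [rigRow, hwv]
  let force : (V × Fin d → ℝ) →ₗ[ℝ] Fin d → ℝ := LinearMap.funLeft ℝ ℝ (Prod.mk v)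
  have hle : Submodule.span ℝ ((fun w => p w - p v) '' W) ≤
      (Submodule.span ℝ (rigRow d p '' completeEdges (insert v W))).map force := by
    rw [Submodule.span_le]
    rintro _ ⟨w, hw, rfl⟩
    refine ⟨-rigRow d p s(v, w), neg_mem (Submodule.subset_span ⟨_, hedge hw, rfl⟩), ?_⟩
    exact (congrArg Neg.neg (hrow hw)).trans (neg_neg _)
  exact hle hf

theorem uncurry_dotProduct_rigRow [Fintype V] (m : V → Fin d → ℝ) (u v : V) :
    Function.uncurry m ⬝ᵥ rigRow d p s(u, v) = (m u - m v) ⬝ᵥ (p u - p v) := by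
  have hcurry (w : V) : Function.curry (rigRow d p s(u, v)) w =
      ((if w = u then (1 : ℝ) else 0) - if w = v then 1 else 0) • (p u - p v) := rfl
  simp only [uncurry_dotProduct_eq_sum, hcurry, dotProduct_smul, smul_eq_mul, sub_mul, ite_mul,
    one_mul, zero_mul, Finset.sum_sub_distrib, Finset.sum_ite_eq', Finset.mem_univ, if_true,
    sub_dotProduct]

theorem IsGeneralPosition.rigRow_notMem_span [Finite V] (hp : IsGeneralPosition p)
    {W : Finset V} (hW : W.card ≤ d + 1) {e : Sym2 V} (he : e ∈ completeEdges (W : Set V)) :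
    rigRow d p e ∉ Submodule.span ℝ (rigRow d p '' (completeEdges (W : Set V) \ {e})) := by
  cases nonempty_fintype V
  induction e with
  | _ u v =>
    obtain ⟨huv, hu, hv⟩ := mk_mem_completeEdges.1 he
    have hcard : (W.erase u).card ≤ d := by
      rw [Finset.card_erase_of_mem hu]
      omega
    obtain ⟨h, hh⟩ := hp.exists_dotProduct_sub_eq hcard (W.notMem_erase u) (Pi.single v 1)
    -- Moving `u` alone with velocity `h` changes, to first order, the length of no edge of `W`
    -- other than `s(u, v)`.
    have hwork {w : V} (hw : w ∈ W) (hwu : w ≠ u) :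
        Function.uncurry (Pi.single u h) ⬝ᵥ rigRow d p s(u, w) =
          -(Pi.single v 1 : V → ℝ) w := by
      rw [uncurry_dotProduct_rigRow, ← hh w (Finset.mem_erase.2 ⟨hwu, hw⟩), ← dotProduct_neg,
        neg_sub, Pi.single_eq_same, Pi.single_eq_of_ne hwu, sub_zero]
    intro hmem
    refine absurd (mem_span_iff_forall_dotProduct.1 hmem (Function.uncurry (Pi.single u h)) ?_) ?_
    · rintro _ ⟨f, ⟨hf, hfe⟩, rfl⟩
      by_cases huf : u ∈ f
      · obtain ⟨w, rfl⟩ := huf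
        obtain ⟨huw, -, hw⟩ := mk_mem_completeEdges.1 hf
        have hwv : w ≠ v := fun h => hfe (by simp [h])
        rw [hwork hw huw.symm, Pi.single_eq_of_ne hwv, neg_zero]
      · induction f with
        | _ a b =>
          rw [Sym2.mem_iff, not_or] at huf
          rw [uncurry_dotProduct_rigRow, Pi.single_eq_of_ne' huf.1, Pi.single_eq_of_ne' huf.2,
            sub_zero, zero_dotProduct]
    · rw [hwork hv huv.symm, Pi.single_eq_same]
      norm_num

variable [Fintype V]

theorem rigRow_mem_equilibriumLoads {W : Set V} {e : Sym2 V} (he : ∀ v ∈ e, v ∈ W) :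
    rigRow d p e ∈ equilibriumLoads p W := by
  refine ⟨fun v hv i => rigRow_apply_of_notMem (fun hve => hv (he v hve)) i, fun t ht => ?_⟩
  induction e with
  | _ u v => exact (uncurry_dotProduct_rigRow _ u v).trans (ht _ _)

theorem span_rigRow_le_equilibriumLoads {W : Set V} {F : Set (Sym2 V)}
    (hF : ∀ e ∈ F, ∀ v ∈ e, v ∈ W) :
    Submodule.span ℝ (rigRow d p '' F) ≤ equilibriumLoads p W := by
  rw [Submodule.span_le]
  rintro _ ⟨e, he, rfl⟩
  exact rigRow_mem_equilibriumLoads (hF e he)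

theorem IsGeneralPosition.equilibriumLoads_le_span_rigRow (hp : IsGeneralPosition p) (W : Set V) :
    equilibriumLoads p W ≤ Submodule.span ℝ (rigRow d p '' completeEdges W) := by
  lift W to Finset V using W.toFinite
  induction W using Finset.induction_on with
  | empty => simp [equilibriumLoads_empty]
  | insert v W hv ih =>
    intro x hx
    rw [Finset.coe_insert] at hx ⊢
    obtain ⟨y, hy, hxy⟩ := exists_mem_span_rigRow_curry_eq hv
      (hp.curry_mem_span_of_mem_equilibriumLoads hv hx)
    have hz : x - y ∈ equilibriumLoads p (W : Set V) := by
      refine mem_equilibriumLoads_of_superset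
        (sub_mem hx (span_rigRow_le_equilibriumLoads (fun _ he => he.2) hy)) fun w hw hwW i => ?_
      obtain rfl : w = v := by simpa [hwW] using hw
      exact sub_eq_zero.2 (congrFun hxy i).symm
    rw [← sub_add_cancel x y]
    exact add_mem (Submodule.span_mono (Set.image_mono
      (completeEdges_mono (Set.subset_insert v _))) (ih hz)) hy

theorem IsGeneralPosition.span_rigRow_completeEdges (hp : IsGeneralPosition p) (W : Set V) :
    Submodule.span ℝ (rigRow d p '' completeEdges W) = equilibriumLoads p W :=
  (span_rigRow_le_equilibriumLoads fun _ he => he.2).antisymm (hp.equilibriumLoads_le_span_rigRow W)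

end RigidityRows

section LoadDimension

variable {d : ℕ} {V : Type*} [Fintype V] {p : V → Fin d → ℝ}

namespace IsGeneralPosition

theorem finrank_equilibriumLoads_le_choose (hp : IsGeneralPosition p) (W : Finset V) :
    finrank ℝ (equilibriumLoads p (W : Set V)) ≤ W.card.choose 2 := by
  classical
  rw [← hp.span_rigRow_completeEdges]
  calc finrank ℝ (Submodule.span ℝ (rigRow d p '' completeEdges (W : Set V)))
      ≤ (rigRow d p '' completeEdges (W : Set V)).ncard := by
        rw [Set.ncard_eq_toFinset_card']
        exact finrank_span_le_card _
    _ ≤ (completeEdges (W : Set V)).ncard := Set.ncard_image_le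
    _ ≤ W.card.choose 2 := ncard_completeEdges_le W

theorem finrank_equilibriumLoads_add_choose_le (hp : IsGeneralPosition p) {W : Finset V}
    (hW : d ≤ W.card) :
    finrank ℝ (equilibriumLoads p (W : Set V)) + (d + 1).choose 2 ≤ d * W.card := by
  classical
  obtain ⟨W₀, hW₀, hcard⟩ := Finset.exists_subset_card_eq hW
  let restrict : (V × Fin d → ℝ) →ₗ[ℝ] ((W \ W₀ : Finset V) × Fin d → ℝ) :=
    LinearMap.funLeft ℝ ℝ (Prod.map Subtype.val id)
  have hrank := finrank_map_add_finrank_inf_ker restrict (equilibriumLoads p (W : Set V))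
  have hmap : finrank ℝ ((equilibriumLoads p (W : Set V)).map restrict) ≤ (W.card - d) * d := by
    refine (Submodule.finrank_le _).trans_eq ?_
    rw [finrank_fintype_fun_eq_card, Fintype.card_prod, Fintype.card_coe, Fintype.card_fin,
      Finset.card_sdiff_of_subset hW₀, hcard]
  have hker : equilibriumLoads p (W : Set V) ⊓ LinearMap.ker restrict ≤
      equilibriumLoads p (W₀ : Set V) := fun x hx =>
    mem_equilibriumLoads_of_superset hx.1 fun v hv hv₀ i =>
      congrFun (LinearMap.mem_ker.1 hx.2) (⟨v, Finset.mem_sdiff.2 ⟨hv, hv₀⟩⟩, i)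
  have hker_rank := (Submodule.finrank_mono hker).trans (hp.finrank_equilibriumLoads_le_choose W₀)
  have hchoose : d * d = d + 2 * d.choose 2 := by
    rw [Nat.choose_two_right, Nat.two_mul_div_two_of_even (Nat.even_mul_pred_self d)]
    cases d with
    | zero => rfl
    | succ n => simp only [Nat.add_sub_cancel]; ring
  have hsucc : (d + 1).choose 2 = d + d.choose 2 := by simp [Nat.choose_succ_succ']
  have hmul : (W.card - d) * d + d * d = d * W.card := by
    rw [← add_mul, Nat.sub_add_cancel hW, mul_comm]
  rw [hcard] at hker_rank
  omega

end IsGeneralPosition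

end LoadDimension

section Balanced

variable {d k : ℕ} {V : Type*} [Fintype V] [DecidableEq V] {p : V → Fin d → ℝ}
  {D B : Finset (Sym2 V)}

theorem coe_subset_completeEdges_esupp (hB : ∀ e ∈ B, ¬ e.IsDiag) :
    (B : Set (Sym2 V)) ⊆ completeEdges (esupp B : Set V) :=
  fun e he => ⟨hB e he, fun v hv => by simpa [esupp] using ⟨e, he, hv⟩⟩

theorem IsGeneralPosition.lt_card_esupp (hp : IsGeneralPosition p)
    (hloop : ∀ e ∈ B, ¬ e.IsDiag)
    (hstress : ∀ e ∈ B, ∃ s ∈ stressSpace ℝ (rigRow d p) (B : Set (Sym2 V)), s e ≠ 0)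
    (hB : B.Nonempty) : d < (esupp B).card := by
  obtain ⟨e, he⟩ := hB
  have hsub := coe_subset_completeEdges_esupp hloop
  by_contra hcard
  refine hp.rigRow_notMem_span (W := esupp B) (by omega) (hsub he) ?_
  exact Submodule.span_mono (Set.image_mono (Set.sdiff_subset_sdiff_left hsub))
    ((mem_span_image_sdiff_singleton_iff (Finset.mem_coe.2 he)).2 (hstress e he))

theorem IsGeneralPosition.span_rigRow_eq_of_isRigidOn (hp : IsGeneralPosition p)
    (hloop : ∀ e ∈ B, ¬ e.IsDiag) (hcard : d ≤ (esupp B).card)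
    (hrigid : IsRigidOn d p (esupp B) B) :
    Submodule.span ℝ (rigRow d p '' B) = equilibriumLoads p (esupp B : Set V) := by
  have hsub := coe_subset_completeEdges_esupp hloop
  have hle : Submodule.span ℝ (rigRow d p '' B) ≤ equilibriumLoads p (esupp B : Set V) :=
    span_rigRow_le_equilibriumLoads fun e he => (hsub he).2
  rcases hrigid with ⟨-, hcomplete⟩ | hrank
  · refine hle.antisymm ?_
    rw [← hp.span_rigRow_completeEdges]
    refine Submodule.span_mono (Set.image_mono fun e he => ?_)
    induction e with
    | _ u v =>
      obtain ⟨huv, hu, hv⟩ := mk_mem_completeEdges.1 he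
      exact hcomplete u hu v hv huv
  · have hdim := hp.finrank_equilibriumLoads_add_choose_le hcard
    rw [rrk] at hrank
    exact Submodule.eq_of_le_of_finrank_le hle (by zify at hdim ⊢; linarith)

theorem IsGeneralPosition.span_rigRow_eq_of_forall_exists_stress (hp : IsGeneralPosition p)
    (hloop : ∀ e ∈ B, ¬ e.IsDiag)
    (hstress : ∀ e ∈ B, ∃ s ∈ stressSpace ℝ (rigRow d p) (B : Set (Sym2 V)), s e ≠ 0)
    (hrigid : B.Nonempty → IsRigidOn d p (esupp B) B) :
    Submodule.span ℝ (rigRow d p '' B) = equilibriumLoads p (esupp B : Set V) := by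
  rcases B.eq_empty_or_nonempty with rfl | hne
  · simp [esupp, equilibriumLoads_empty]
  · exact hp.span_rigRow_eq_of_isRigidOn hloop (hp.lt_card_esupp hloop hstress hne).le (hrigid hne)

theorem mem_rcl_iff {F : Set (Sym2 V)} {e : Sym2 V} :
    e ∈ rcl d p F ↔ ¬ e.IsDiag ∧ rigRow d p e ∈ Submodule.span ℝ (rigRow d p '' F) := by
  rw [rcl, Set.mem_ofPred_eq, rrk, rrk, Set.image_insert_eq,
    finrank_span_insert_eq_iff (Set.toFinite _)]

theorem IsGeneralPosition.span_rigRow_biInter_rcl (hp : IsGeneralPosition p) {ι : Type*} {S : Set ι}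
    (hS : S.Nonempty) {F : ι → Set (Sym2 V)} {W : ι → Set V}
    (hF : ∀ i ∈ S, Submodule.span ℝ (rigRow d p '' F i) = equilibriumLoads p (W i)) :
    Submodule.span ℝ (rigRow d p '' ⋂ i ∈ S, rcl d p (F i)) =
      ⨅ i ∈ S, Submodule.span ℝ (rigRow d p '' F i) := by
  apply le_antisymm
  · rw [Submodule.span_le]
    rintro _ ⟨e, he, rfl⟩
    simp only [SetLike.mem_coe, Submodule.mem_iInf]
    exact fun i hi => (mem_rcl_iff.1 (Set.mem_iInter₂.1 he i hi)).2
  · rw [biInf_congr hF, ← equilibriumLoads_biInter hS, ← hp.span_rigRow_completeEdges]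
    refine Submodule.span_mono (Set.image_mono fun e he => Set.mem_iInter₂.2 fun i hi => ?_)
    refine mem_rcl_iff.2 ⟨he.1, hF i hi ▸ rigRow_mem_equilibriumLoads fun v hv => ?_⟩
    exact Set.mem_iInter₂.1 (he.2 v hv) i hi

theorem isKFoldCircuit_iff_isStressCircuit :
    IsKFoldCircuit d p D k ↔ IsStressCircuit ℝ (rigRow d p) D k := by
  have hnullity := finrank_span_image_add_finrank_stressSpace (K := ℝ) (rigRow d p) D
  have hbridgeless : (∀ f ∈ D, rrk d p (↑D \ {f}) = rrk d p ↑D) ↔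
      ∀ f ∈ D, ∃ s ∈ stressSpace ℝ (rigRow d p) (D : Set (Sym2 V)), s f ≠ 0 :=
    forall₂_congr fun f hf => finrank_span_image_sdiff_singleton_eq_iff hf
  rw [IsKFoldCircuit, hbridgeless, rrk]
  exact ⟨fun h => ⟨h.1, by omega⟩, fun h => ⟨h.1, by have := h.2; omega⟩⟩

theorem setOf_isPrincipalPart (hD : IsStressCircuit ℝ (rigRow d p) D (k + 1)) :
    {A | IsPrincipalPart d p D (k + 1) A} = seriesPartition ℝ (rigRow d p) D := by
  ext A
  simp only [Set.mem_ofPred_eq, IsPrincipalPart, Nat.add_sub_cancel, Finset.mem_coe,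
    isKFoldCircuit_iff_isStressCircuit, hD.exists_sdiff_eq_iff_mem_seriesPartition]

theorem kfold_circuit_rigid_subcircuits_balanced_general (hk : 1 ≤ k)
    (hp : IsGeneralPosition p) (hloop : ∀ e ∈ D, ¬ e.IsDiag) (hD : IsKFoldCircuit d p D k)
    (hrigid : ∀ B ⊆ D, B.Nonempty → IsKFoldCircuit d p B (k - 1) → IsRigidOn d p (esupp B) B) :
    IsBalanced d p D k := by
  obtain ⟨m, rfl⟩ := Nat.exists_eq_add_of_le' hk
  have hD' := isKFoldCircuit_iff_isStressCircuit.1 hD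
  have hload (A) (hA : A ∈ (seriesPartition ℝ (rigRow d p) D : Set (Finset (Sym2 V)))) :
      Submodule.span ℝ (rigRow d p '' (D \ A : Finset (Sym2 V))) =
        equilibriumLoads p (esupp (D \ A) : Set V) := by
    obtain ⟨B, hBD, hB, rfl⟩ := hD'.exists_sdiff_eq_iff_mem_seriesPartition.2 hA
    rw [Finset.sdiff_sdiff_eq_self hBD]
    exact hp.span_rigRow_eq_of_forall_exists_stress (fun e he => hloop e (hBD he))
      hB.exists_apply_ne_zero fun hne => hrigid B hBD hne (isKFoldCircuit_iff_isStressCircuit.2 hB)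
  obtain ⟨e, he⟩ := hD'.nonempty
  have hspan := hp.span_rigRow_biInter_rcl ⟨_, mem_seriesPartition.2 ⟨e, he, rfl⟩⟩ hload
  rw [IsBalanced, setOf_isPrincipalPart hD', Set.ncard_coe_finset, rrk, hspan]
  exact hD'.finrank_iInf_span_sdiff_add

end Balanced

/-- Theorem 3.16: a `k`-fold `R_d`-circuit all of whose nonempty `(k-1)`-fold
circuits are `R_d`-rigid is balanced. -/
theorem kfold_circuit_rigid_subcircuits_balanced
    (d k : ℕ) (hd : 1 ≤ d) (hk : 1 ≤ k)
    {V : Type*} [Fintype V] [DecidableEq V]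
    (E : Finset (Sym2 V)) (hsimple : ∀ e ∈ E, ¬ e.IsDiag)
    (hcov : ∀ w : V, ∃ e ∈ E, w ∈ e)
    (p : V → Fin d → ℝ) (hp : Generic d p)
    (hE : IsKFoldCircuit d p E k)
    (hrigidsub : ∀ B ⊆ E, B.Nonempty → IsKFoldCircuit d p B (k-1) →
      IsRigidOn d p (esupp B) B) :
    IsBalanced d p E k :=
  kfold_circuit_rigid_subcircuits_balanced_general hk hp.isGeneralPosition hsimple hE hrigidsub
end

section
/- Let m ≥ 2, d = 2m, and n ≥ 4m+5. Then there exists a set 𝓗 of pairwise disjoint unordered pairs of edges of K_n (one may take 𝓗 = {(x_{2i−1}y_j, x_{2i}y_j) : 1 ≤ i ≤ m+1, 1 ≤ j ≤ 2m+3} on a complete bipartite subgraph of K_n with sides {x_1,…,x_{2m+2}} and {y_1,…,y_{2m+3}}) such that for every flat Z of edges of K_n (i.e., cl_d(Z) = Z) and every partition (𝓗_1,…,𝓗_t) of 𝓗, ν(𝓗) < r_d(Z) + Σ_{i=1}^t floor((r_d(Z ∪ ⋃_{{e,f} ∈ 𝓗_i} {e,f}) − r_d(Z))/2). In particular, the generic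 d-dimensional rigidity matroid on K_n does not have the matroid matching property for any even d = 2m ≥ 4. -/
open scoped BigOperators

/-!
Bolker and Roth: if no affine dependency relates the Veronese points of the vertices of a complete
bipartite framework, its stresses are the matrices whose rows and columns are affine dependencies
of the two sides. For a generic framework with sides `X`, `Y` of sizes `d + 2` and `d + 3` they are
therefore the outer products `a ⊗ b`, with `a` the nowhere-zero affine dependency of `X`, unique up
to scaling, and `b` in the `2`-dimensional space of affine dependencies of `Y`, which has members
vanishing at exactly one prescribed vertex. Such a stress avoids the edges at one vertex of `Y`, so
every matching of the paired edges misses at least two pairs.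

A partition of the pairs colours the edges. Modulo a set `Z`, each colour class of pairs loses about
half of the dimension of the space of stresses modulo `Z` which it supports. If these losses
exceeded the rank of `Z` by at least two, the stresses modulo `Z` would split into at most
one-dimensional colour parts, and the rows of `Z` would lie in the span of the bipartite rows, which
contains the row of no other edge. By the splitting, `Z` contains no bipartite edge either, so the
rows of `Z` vanish; but the stresses `a ⊗ b` themselves do not split along the colours.
-/

section LinearAlgebra

variable {K M N : Type*} [DivisionRing K] [AddCommGroup M] [Module K M] [AddCommGroup N]
  [Module K N]

lemma finrank_map_add_finrank_inf_ker_s12 [FiniteDimensional K M] (L : M →ₗ[K] N)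
    (S : Submodule K M) :
    Module.finrank K (S.map L) + Module.finrank K ↥(S ⊓ LinearMap.ker L) =
      Module.finrank K S := by
  rw [← LinearMap.finrank_range_add_finrank_ker (L.domRestrict S), LinearMap.range_domRestrict,
    LinearMap.ker_domRestrict, ← Submodule.map_comap_subtype,
    Submodule.finrank_map_subtype_eq]

lemma finrank_sup_map_add_finrank_inf_comap [FiniteDimensional K M] [FiniteDimensional K N]
    (L : M →ₗ[K] N) (S : Submodule K M) (W : Submodule K N) :
    Module.finrank K ↥(W ⊔ S.map L) + Module.finrank K ↥(S ⊓ W.comap L) =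
      Module.finrank K W + Module.finrank K S := by
  have hS := finrank_map_add_finrank_inf_ker_s12 (W.mkQ ∘ₗ L) S
  have hW := finrank_map_add_finrank_inf_ker_s12 W.mkQ (W ⊔ S.map L)
  rw [LinearMap.ker_comp, Submodule.ker_mkQ] at hS
  rw [Submodule.ker_mkQ, Submodule.map_sup, Submodule.mkQ_map_self, bot_sup_eq,
    inf_eq_right.mpr le_sup_left, ← Submodule.map_comp] at hW
  lia

lemma finrank_comap_eq [FiniteDimensional K M] (L : M →ₗ[K] N) (W : Submodule K N) :
    Module.finrank K (W.comap L) =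
      Module.finrank K ↥(W ⊓ LinearMap.range L) + Module.finrank K (LinearMap.ker L) := by
  rw [← finrank_map_add_finrank_inf_ker_s12 L (W.comap L), Submodule.map_comap_eq, inf_comm,
    inf_eq_right.mpr (LinearMap.ker_le_comap L)]

lemma finrank_iSup_eq_sum_of_iSupIndep [FiniteDimensional K M] {κ : Type*} [Fintype κ]
    {P : κ → Submodule K M} (hP : iSupIndep P) :
    Module.finrank K ↥(⨆ k, P k) = ∑ k, Module.finrank K (P k) := by
  classical
  rw [Submodule.iSup_eq_range_dfinsupp_lsum,
    LinearMap.finrank_range_of_inj hP.dfinsupp_lsum_injective]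
  exact Module.finrank_directSum K fun k => P k

/- Both conclusions come from `∑ k, (dim (P k) + 1) / 2 ≤ ∑ k, dim (P k) ≤ dim T`, whose first
inequality is strict in every summand with `dim (P k) ≥ 2`. -/
lemma finrank_le_one_and_iSup_eq_of_finrank_le [FiniteDimensional K M] {κ : Type*} [Fintype κ]
    {P : κ → Submodule K M} (hP : iSupIndep P) {T : Submodule K M} (hPT : ∀ k, P k ≤ T)
    (hT : Module.finrank K T ≤ ∑ k, (Module.finrank K (P k) + 1) / 2) :
    (∀ k, Module.finrank K (P k) ≤ 1) ∧ ⨆ k, P k = T := by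
  have hsup := finrank_iSup_eq_sum_of_iSupIndep hP
  have hle : Module.finrank K ↥(⨆ k, P k) ≤ Module.finrank K T :=
    Submodule.finrank_mono (iSup_le hPT)
  have hhalf : ∀ k ∈ Finset.univ,
      (Module.finrank K (P k) + 1) / 2 ≤ Module.finrank K (P k) := by intro k _; lia
  have hsum := Finset.sum_le_sum hhalf
  refine ⟨fun k => ?_, Submodule.eq_of_le_of_finrank_eq (iSup_le hPT) (by lia)⟩
  have := (Finset.sum_eq_sum_iff_of_le hhalf).mp (by lia) k (Finset.mem_univ k)
  lia

lemma mul_eq_mul_of_finrank_le_one {K E : Type*} [Field K] [Finite E]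
    {P : Submodule K (E → K)} (hP : Module.finrank K P ≤ 1) {σ τ : E → K}
    (hσ : σ ∈ P) (hτ : τ ∈ P) (e f : E) : σ e * τ f = σ f * τ e := by
  obtain ⟨v, rfl⟩ := (Submodule.finrank_le_one_iff_isPrincipal P).mp hP
  obtain ⟨a, rfl⟩ := Submodule.mem_span_singleton.mp hσ
  obtain ⟨b, rfl⟩ := Submodule.mem_span_singleton.mp hτ
  simp only [Pi.smul_apply, smul_eq_mul]
  ring

end LinearAlgebra

section ColourPart

variable {K E κ : Type*} [Field K] [Fintype E]

/-- The vectors of `K ^ E` whose support is contained in `s`. -/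
noncomputable def supportedOn (K : Type*) {E : Type*} [Field K] [Fintype E] (s : Set E) :
    Submodule K (E → K) :=
  Submodule.span K (Pi.basisFun K E '' s)

lemma mem_supportedOn {s : Set E} {ω : E → K} :
    ω ∈ supportedOn K s ↔ ∀ e ∉ s, ω e = 0 := by
  rw [supportedOn, Module.Basis.mem_span_image]
  simp only [Set.subset_def, Finset.mem_coe, Finsupp.mem_support_iff, Pi.basisFun_repr]
  exact forall_congr' fun e => not_imp_comm

lemma finrank_supportedOn (s : Finset E) :
    Module.finrank K (supportedOn K (s : Set E)) = s.card := by
  classical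
  rw [supportedOn, ← Finset.coe_image, finrank_span_finset_eq_card,
    Finset.card_image_of_injective _ (Pi.basisFun K E).injective]
  rw [Finset.coe_image]
  exact ((Pi.basisFun K E).linearIndependent.linearIndepOn _).id_image

lemma map_linearCombination_supportedOn {M : Type*} [AddCommGroup M] [Module K M] (v : E → M)
    (s : Set E) :
    (supportedOn K s).map (Fintype.linearCombination K v) = Submodule.span K (v '' s) := by
  classical
  rw [supportedOn, Submodule.map_span, Set.image_image]
  simp only [Pi.basisFun_apply, Fintype.linearCombination_apply_single, one_smul]

/-- The vectors of `T` whose support lies in the colour class `k` of the colouring `c`. -/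
noncomputable def colourPart (c : E → κ) (T : Submodule K (E → K)) (k : κ) :
    Submodule K (E → K) :=
  supportedOn K (c ⁻¹' {k}) ⊓ T

lemma iSupIndep_colourPart (c : E → κ) (T : Submodule K (E → K)) :
    iSupIndep (colourPart c T) := by
  intro k
  have hle : ⨆ (l) (_ : l ≠ k), colourPart c T l ≤ supportedOn K (c ⁻¹' {k})ᶜ := by
    refine iSup₂_le fun l hl ω hω => mem_supportedOn.mpr fun e he => ?_
    exact mem_supportedOn.mp hω.1 e fun hel => he fun hek => hl (hel.symm.trans hek)
  refine Submodule.disjoint_def.mpr fun ω hω hω' => funext fun e => ?_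
  by_cases he : e ∈ c ⁻¹' {k}
  · exact mem_supportedOn.mp (hle hω') e (not_not_intro he)
  · exact mem_supportedOn.mp hω.1 e he

lemma indicator_mem_of_mem_iSup_colourPart {c : E → κ} {T : Submodule K (E → K)} {ω : E → K}
    (hω : ω ∈ ⨆ k, colourPart c T k) (k : κ) :
    (c ⁻¹' {k}).indicator ω ∈ colourPart c T k := by
  induction hω using Submodule.iSup_induction' with
  | mem l τ hτ =>
    have hτl := mem_supportedOn.mp hτ.1
    rcases eq_or_ne l k with rfl | hlk
    · rwa [Set.indicator_eq_self.mpr fun e he => of_not_not (mt (hτl e) he)]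
    · have hzero : (c ⁻¹' {k}).indicator τ = 0 := Set.indicator_eq_zero.mpr <|
        Set.disjoint_left.mpr fun e he hek => he (hτl e fun hel => hlk (hel.symm.trans hek))
      exact hzero ▸ zero_mem _
  | zero => rw [Set.indicator_zero']; exact zero_mem _
  | add τ υ _ _ hτ hυ => rw [Set.indicator_add']; exact add_mem hτ hυ

end ColourPart

section GenericPoints

lemma exists_orthogonal_sum_monomials_ne_zero {R K σ ι κ : Type*} [CommRing R] [Nontrivial R]
    [CommRing K] [Algebra R K] {x : σ → K} (hx : AlgebraicIndependent R x) [Fintype ι]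
    [Fintype κ] {μ : ι → σ →₀ ℕ} (hμ : Function.Injective μ) (T : κ → ι → R)
    (hcard : Fintype.card κ < Fintype.card ι) :
    ∃ a : ι → R, (∀ k, ∑ i, T k i * a i = 0) ∧
      ∑ i, (μ i).prod (fun j n => x j ^ n) * algebraMap R K (a i) ≠ 0 := by
  classical
  obtain ⟨a, ha, ha0⟩ : ∃ a, Matrix.mulVecLin (Matrix.of T) a = 0 ∧ a ≠ 0 := by
    by_contra! hker
    exact hcard.not_ge (card_le_of_injective R (Matrix.mulVecLin (Matrix.of T))
      ((injective_iff_map_eq_zero _).mpr hker))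
  refine ⟨a, congrFun ha, fun hsum => ha0 (funext fun i => ?_)⟩
  have hpoly : ∑ i, MvPolynomial.monomial (μ i) (a i) = 0 :=
    (injective_iff_map_eq_zero _).mp hx _ (by
      simpa only [map_sum, MvPolynomial.aeval_monomial, mul_comm] using hsum)
  simpa [MvPolynomial.coeff_sum, MvPolynomial.coeff_monomial, hμ.eq_iff] using
    congrArg (MvPolynomial.coeff (μ i)) hpoly

/-- The homogeneous coordinates `(1, x)` of a point `x` of affine space. -/
def homogenize {R : Type*} [One R] {d : ℕ} (x : Fin d → R) : Fin (d + 1) → R :=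
  Matrix.vecCons 1 x

/-- The `k`-th symmetric power of a vector: its coordinates are the degree-`k` monomials in the
coordinates of `z`. -/
def veronese {R ι : Type*} [CommMonoid R] (k : ℕ) (z : ι → R) : Sym ι k → R :=
  fun s => ((s : Multiset ι).map z).prod

lemma veronese_one {R ι : Type*} [CommMonoid R] (z : ι → R) (a : ι) :
    veronese 1 z (a ::ₛ Sym.nil) = z a :=
  (congrArg Multiset.prod (Multiset.map_singleton z a)).trans (Multiset.prod_singleton _)

lemma veronese_two {R ι : Type*} [CommMonoid R] (z : ι → R) (a b : ι) :
    veronese 2 z (a ::ₛ b ::ₛ Sym.nil) = z a * z b := by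
  change (Multiset.map z {a, b}).prod = z a * z b
  rw [Multiset.insert_eq_cons, Multiset.map_cons, Multiset.prod_cons, Multiset.map_singleton,
    Multiset.prod_singleton]

/-- The exponent of the monomial in `d` variables obtained from a monomial of degree `k` in the
variables `0, …, d` by setting the variable `0` to `1`. -/
noncomputable def dehomogenizedExponent {d k : ℕ} (s : Sym (Fin (d + 1)) k) : Fin d →₀ ℕ :=
  (Multiset.toFinsupp (s : Multiset (Fin (d + 1)))).tail

lemma dehomogenizedExponent_injective (d k : ℕ) :
    Function.Injective (dehomogenizedExponent : Sym (Fin (d + 1)) k → Fin d →₀ ℕ) := by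
  have hdegree (s : Sym (Fin (d + 1)) k) : Multiset.toFinsupp (s : Multiset (Fin (d + 1))) 0 +
      (dehomogenizedExponent s).sum (fun _ n => n) = k := by
    rw [dehomogenizedExponent, ← Finsupp.sum_cons, Finsupp.cons_tail]
    exact (Multiset.toFinsupp_sum_eq _).trans s.2
  intro s t hst
  have hzero := (hdegree s).trans (hdegree t).symm
  rw [hst, Nat.add_right_cancel_iff] at hzero
  refine Sym.coe_injective (Multiset.toFinsupp.injective ?_)
  rw [← Finsupp.cons_tail (Multiset.toFinsupp (s : Multiset (Fin (d + 1)))), hzero]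
  exact (congrArg _ hst).trans (Finsupp.cons_tail _)

lemma prod_dehomogenizedExponent {R : Type*} [CommSemiring R] {d k : ℕ} (x : Fin d → R)
    (s : Sym (Fin (d + 1)) k) :
    (dehomogenizedExponent s).prod (fun j n => x j ^ n) = veronese k (homogenize x) s := by
  calc (dehomogenizedExponent s).prod (fun j n => x j ^ n)
      = (Multiset.toFinsupp (s : Multiset (Fin (d + 1)))).prod
          (fun j n => homogenize x j ^ n) := by
        rw [Finsupp.prod_fintype _ _ fun _ => pow_zero _,
          Finsupp.prod_fintype _ _ fun _ => pow_zero _, Fin.prod_univ_succ]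
        simp [homogenize, dehomogenizedExponent, Finsupp.tail_apply]
    _ = veronese k (homogenize x) s := (Finset.prod_multiset_map_count _ _).symm

variable {V W : Type*} {d k : ℕ} {q : W → Fin d → ℝ}

lemma Generic.comp {p : V → Fin d → ℝ} (hp : Generic d p) {g : W → V}
    (hg : Function.Injective g) : Generic d (p ∘ g) :=
  AlgebraicIndependent.comp hp (Prod.map g id) (hg.prodMap Function.injective_id)

lemma Generic.coord_ne (hq : Generic d q) {u v : W} (huv : u ≠ v) (i : Fin d) :
    q u i ≠ q v i := fun h =>
  huv (congrArg Prod.fst (AlgebraicIndependent.injective hq (a₁ := (u, i)) (a₂ := (v, i)) h))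

/-- The `ℚ`-algebra generated by the coordinates of the points other than `q v`. -/
noncomputable def coordAlgebraNe (q : W → Fin d → ℝ) (v : W) : Subalgebra ℚ ℝ :=
  Algebra.adjoin ℚ ((fun wi : W × Fin d => q wi.1 wi.2) '' {wi | wi.1 ≠ v})

lemma homogenize_mem_coordAlgebraNe (q : W → Fin d → ℝ) {v w : W} (hwv : w ≠ v)
    (a : Fin (d + 1)) : homogenize (q w) a ∈ coordAlgebraNe q v := by
  refine Fin.cases (one_mem _) (fun i => ?_) a
  exact Algebra.subset_adjoin ⟨(w, i), hwv, rfl⟩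

lemma Generic.algebraicIndependent_coordAlgebraNe (hq : Generic d q) (v : W) :
    AlgebraicIndependent (coordAlgebraNe q v) (q v) := by
  have hdisj : Disjoint {wi : W × Fin d | wi.1 ≠ v} {wi | wi.1 = v} :=
    Set.disjoint_left.mpr fun _ hne heq => hne heq
  exact (AlgebraicIndependent.adjoin_of_disjoint hq hdisj).comp (fun i => ⟨(v, i), rfl⟩)
    fun i j hij => congrArg (fun wi => wi.1.2) hij

lemma Generic.exists_functional_veronese_ne_zero (hq : Generic d q) (v : W) {κ : Type*}
    [Fintype κ] (hcard : Fintype.card κ < (d + k).choose k) {z : κ → Fin (d + 1) → ℝ}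
    (hz : ∀ j a, z j a ∈ coordAlgebraNe q v) :
    ∃ φ : (Sym (Fin (d + 1)) k → ℝ) →ₗ[ℝ] ℝ,
      (∀ j, φ (veronese k (z j)) = 0) ∧ φ (veronese k (homogenize (q v))) ≠ 0 := by
  obtain ⟨a, hzero, hne⟩ := exists_orthogonal_sum_monomials_ne_zero
    (hq.algebraicIndependent_coordAlgebraNe v) (dehomogenizedExponent_injective d k)
    (fun j => veronese k fun b => (⟨z j b, hz j b⟩ : coordAlgebraNe q v))
    (by rwa [Sym.card_sym_eq_choose, Fintype.card_fin, Nat.add_right_comm, Nat.add_sub_cancel])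
  refine ⟨Fintype.linearCombination ℝ fun s => (a s : ℝ), fun j => ?_, ?_⟩
  · have hval (s : Sym (Fin (d + 1)) k) :
        ((veronese k (fun b => (⟨z j b, hz j b⟩ : coordAlgebraNe q v)) s :
          coordAlgebraNe q v) : ℝ) = veronese k (z j) s := by
      simp only [veronese]
      rw [← Subalgebra.coe_val, map_multiset_prod, Multiset.map_map]
      rfl
    simpa only [Fintype.linearCombination_apply, smul_eq_mul, ← hval,
      AddSubmonoidClass.coe_finsetSum, MulMemClass.coe_mul, ZeroMemClass.coe_zero] using
      congrArg Subtype.val (hzero j)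
  · simp only [prod_dehomogenizedExponent] at hne
    exact hne

lemma Generic.linearIndependent_veronese [Fintype W] (hq : Generic d q)
    (hcard : Fintype.card W ≤ (d + k).choose k) :
    LinearIndependent ℝ fun w => veronese k (homogenize (q w)) := by
  classical
  refine Fintype.linearIndependent_iff.mpr fun f hf v => ?_
  obtain ⟨φ, hφ, hφv⟩ := hq.exists_functional_veronese_ne_zero v (k := k)
    (κ := {w // w ≠ v}) (z := fun w => homogenize (q w))
    (by have := Fintype.card_pos_iff.mpr ⟨v⟩; simp [Fintype.card_subtype_compl]; lia)
    fun w => homogenize_mem_coordAlgebraNe q w.2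
  have hsum := congrArg φ hf
  simp only [map_sum, map_smul, map_zero, smul_eq_mul] at hsum
  rw [Fintype.sum_eq_single v fun w hw => by rw [hφ ⟨w, hw⟩, mul_zero]] at hsum
  exact (mul_eq_zero.mp hsum).resolve_right hφv

lemma Generic.linearIndependent_homogenize [Fintype W] (hq : Generic d q)
    (hcard : Fintype.card W ≤ d + 1) : LinearIndependent ℝ fun w => homogenize (q w) := by
  have hver := hq.linearIndependent_veronese (k := 1) (by simpa using hcard)
  refine Fintype.linearIndependent_iff.mpr fun f hf =>
    Fintype.linearIndependent_iff.mp hver f (funext fun s => ?_)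
  obtain ⟨a, s, rfl⟩ := s.exists_eq_cons_of_succ
  rw [s.eq_nil_of_card_zero]
  have hfa := congrFun hf a
  simp only [Finset.sum_apply, Pi.smul_apply, Pi.zero_apply] at hfa ⊢
  simpa only [veronese_one] using hfa

lemma eq_zero_of_smul_veronese_add_smul_veronese_eq {K : Type*} [Field K] {x y : Fin d → K}
    (hxy : x ≠ y) {α β c : K}
    (h : α • veronese 2 (homogenize x) + β • veronese 2 (homogenize y) =
      c • veronese 2 (homogenize x - homogenize y)) : c = 0 := by
  obtain ⟨i, hi⟩ := Function.ne_iff.mp hxy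
  have hne := sub_ne_zero.mpr hi
  have hcoord (a b : Fin (d + 1)) := congrFun h (a ::ₛ b ::ₛ Sym.nil)
  simp only [Pi.add_apply, Pi.smul_apply, smul_eq_mul, veronese_two, Pi.sub_apply] at hcoord
  have h00 := hcoord 0 0
  have h0i := hcoord 0 i.succ
  have hii := hcoord i.succ i.succ
  simp only [homogenize, Matrix.cons_val_zero, Matrix.cons_val_succ] at h00 h0i hii
  have hβ : β = -α := by linear_combination h00
  have hα : α = 0 := mul_right_cancel₀ hne (by rw [hβ] at h0i; linear_combination h0i)
  rw [hβ, hα] at hii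
  exact mul_right_cancel₀ (mul_ne_zero hne hne) (by linear_combination -hii)

lemma Generic.eq_zero_of_sum_veronese_eq_smul [Fintype W] (hq : Generic d q) (hd : 0 < d)
    (hcard : Fintype.card W < (d + 2).choose 2) {u v : W} (huv : u ≠ v) {f : W → ℝ} {c : ℝ}
    (hf : ∑ w, f w • veronese 2 (homogenize (q w)) =
      c • veronese 2 (homogenize (q u) - homogenize (q v))) : c = 0 := by
  classical
  have hzero (w : W) (hw : w ≠ u ∧ w ≠ v) : f w = 0 := by
    obtain ⟨φ, hφ, hφw⟩ := hq.exists_functional_veronese_ne_zero w (k := 2)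
      (κ := Option {w' // w' ≠ w})
      (z := fun j => j.elim (homogenize (q u) - homogenize (q v)) fun w' => homogenize (q w'))
      (by have := Fintype.card_pos_iff.mpr ⟨w⟩; simp [Fintype.card_subtype_compl]; lia)
      (by
        rintro (_ | w') a
        · exact sub_mem (homogenize_mem_coordAlgebraNe q hw.1.symm a)
            (homogenize_mem_coordAlgebraNe q hw.2.symm a)
        · exact homogenize_mem_coordAlgebraNe q w'.2 a)
    have hsum := congrArg φ hf
    have hφe : φ (veronese 2 (homogenize (q u) - homogenize (q v))) = 0 := hφ none
    have hφne (w' : W) (hw' : w' ≠ w) : φ (veronese 2 (homogenize (q w'))) = 0 :=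
      hφ (some ⟨w', hw'⟩)
    simp only [map_sum, map_smul, smul_eq_mul, hφe, mul_zero] at hsum
    rw [Fintype.sum_eq_single w fun w' hw' => by rw [hφne w' hw', mul_zero]] at hsum
    exact (mul_eq_zero.mp hsum).resolve_right hφw
  rw [Fintype.sum_eq_add u v huv fun w hw => by rw [hzero w hw, zero_smul]] at hf
  exact eq_zero_of_smul_veronese_add_smul_veronese_eq
    (fun h => hq.coord_ne huv ⟨0, hd⟩ (congrFun h _)) hf

end GenericPoints

section AffineDependencies

variable {J : Type*} [Fintype J] {d : ℕ}

/-- The affine dependencies `∑ j, f j = 0`, `∑ j, f j • q j = 0` of a family of points. -/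
noncomputable def affineDeps {K : Type*} [Field K] (q : J → Fin d → K) : Submodule K (J → K) :=
  LinearMap.ker (Fintype.linearCombination K fun j => homogenize (q j))

lemma mem_affineDeps {K : Type*} [Field K] {q : J → Fin d → K} {f : J → K} :
    f ∈ affineDeps q ↔ ∑ j, f j • homogenize (q j) = 0 :=
  Iff.rfl

lemma mem_affineDeps_iff_sum_eq_zero {K : Type*} [Field K] {q : J → Fin d → K} {f : J → K} :
    f ∈ affineDeps q ↔ ∑ j, f j = 0 ∧ ∀ a, ∑ j, f j * q j a = 0 := by
  simp [mem_affineDeps, funext_iff, Fin.forall_fin_succ, homogenize]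

variable {q : J → Fin d → ℝ}

lemma Generic.eq_zero_of_mem_affineDeps (hq : Generic d q) {f : J → ℝ} (hf : f ∈ affineDeps q)
    {T : Finset J} (hfT : ∀ j ∉ T, f j = 0) (hT : T.card ≤ d + 1) : f = 0 := by
  have hindep : LinearIndepOn ℝ (fun j => homogenize (q j)) T :=
    (hq.comp Subtype.val_injective).linearIndependent_homogenize (by simpa using hT)
  have hsum : ∑ j ∈ T, f j • homogenize (q j) = 0 := by
    rw [← mem_affineDeps.mp hf]
    exact Finset.sum_subset T.subset_univ fun j _ hj => by rw [hfT j hj, zero_smul]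
  funext j
  by_cases hj : j ∈ T
  · exact linearIndepOn_finset_iff.mp hindep f hsum j hj
  · exact hfT j hj

lemma Generic.exists_mem_affineDeps_ne_zero_iff (hq : Generic d q) {T : Finset J}
    (hT : T.card = d + 2) : ∃ f ∈ affineDeps q, ∀ j, f j ≠ 0 ↔ j ∈ T := by
  classical
  have hdep : ¬ LinearIndepOn ℝ (fun j => homogenize (q j)) T := fun h => by
    have := h.fintype_card_le_finrank
    simp [hT] at this
  rw [linearIndepOn_finset_iff] at hdep
  push Not at hdep
  obtain ⟨f, hsum, i, hiT, hi⟩ := hdep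
  have hf : (T : Set J).indicator f ∈ affineDeps q := by
    rw [mem_affineDeps, ← hsum]
    simp [Set.indicator_apply, Finset.sum_ite_mem]
  refine ⟨_, hf, fun j => ⟨fun hj => Set.mem_of_indicator_ne_zero hj, fun hjT hj => hi ?_⟩⟩
  rw [← Set.indicator_of_mem (s := (T : Set J)) hiT f]
  refine congrFun (hq.eq_zero_of_mem_affineDeps hf (T := T.erase j) (fun l hl => ?_) ?_) i
  · by_cases hlj : l = j
    · rwa [hlj]
    · exact Set.indicator_of_notMem (fun hlT => hl (Finset.mem_erase.mpr ⟨hlj, hlT⟩)) f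
  · rw [Finset.card_erase_of_mem hjT, hT]
    lia

lemma Generic.exists_mem_affineDeps_ne_zero (hq : Generic d q) (hJ : Fintype.card J = d + 2) :
    ∃ f ∈ affineDeps q, ∀ j, f j ≠ 0 := by
  obtain ⟨f, hf, hne⟩ := hq.exists_mem_affineDeps_ne_zero_iff (T := Finset.univ) hJ
  exact ⟨f, hf, fun j => (hne j).mpr (Finset.mem_univ j)⟩

lemma Generic.exists_mem_affineDeps_eq_zero_iff (hq : Generic d q)
    (hJ : Fintype.card J = d + 3) (j : J) : ∃ f ∈ affineDeps q, ∀ j', f j' = 0 ↔ j' = j := by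
  classical
  obtain ⟨f, hf, hne⟩ := hq.exists_mem_affineDeps_ne_zero_iff
    (T := Finset.univ.erase j) (by simp [hJ])
  exact ⟨f, hf, fun j' => by simpa using (hne j').not⟩

lemma Generic.single_notMem_affineDeps [DecidableEq J] (hq : Generic d q) (j : J) :
    Pi.single j 1 ∉ affineDeps q := by
  intro hj
  have hzero := hq.eq_zero_of_mem_affineDeps hj (T := {j})
    (fun j' hj' => Pi.single_eq_of_ne (by simpa using hj') _) (by simp)
  simpa using congrFun hzero j

lemma Generic.finrank_affineDeps_le (hq : Generic d q) (hJ : d + 1 ≤ Fintype.card J) :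
    Module.finrank ℝ (affineDeps q) ≤ Fintype.card J - (d + 1) := by
  classical
  obtain ⟨T, -, hT⟩ := Finset.exists_subset_card_eq (s := (Finset.univ : Finset J)) hJ
  have hinj : Function.Injective
      (LinearMap.funLeft ℝ ℝ (Subtype.val : {j // j ∉ T} → J) ∘ₗ (affineDeps q).subtype) := by
    refine (injective_iff_map_eq_zero _).mpr fun f hf => Subtype.ext ?_
    exact hq.eq_zero_of_mem_affineDeps f.2 (fun j hj => congrFun hf ⟨j, hj⟩) hT.le
  refine (LinearMap.finrank_le_finrank_of_injective hinj).trans_eq ?_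
  rw [Module.finrank_fintype_fun_eq_card, Fintype.card_subtype_compl, Fintype.card_coe, hT]

lemma Generic.mul_eq_mul_of_mem_affineDeps (hq : Generic d q) (hJ : Fintype.card J ≤ d + 2)
    {f h : J → ℝ} (hf : f ∈ affineDeps q) (hh : h ∈ affineDeps q) (i j : J) :
    f i * h j = f j * h i := by
  classical
  have hdep : h i • f - f i • h = 0 := hq.eq_zero_of_mem_affineDeps
    (sub_mem (Submodule.smul_mem _ _ hf) (Submodule.smul_mem _ _ hh)) (T := Finset.univ.erase i)
    (fun l hl => by
      obtain rfl : l = i := by simpa using hl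
      simp [mul_comm])
    (by simp; lia)
  have hj := congrFun hdep j
  simp only [Pi.sub_apply, Pi.smul_apply, smul_eq_mul, Pi.zero_apply] at hj
  linear_combination -hj

end AffineDependencies

section ProductColourings

variable {K X Y κ : Type*} [Field K]

/-- The outer product `a ⊗ b`, as a linear function of `b`. -/
def outerProduct (a : X → K) : (Y → K) →ₗ[K] X × Y → K :=
  LinearMap.pi fun e => a e.1 • LinearMap.proj e.2

lemma outerProduct_apply (a : X → K) (b : Y → K) (e : X × Y) :
    outerProduct a b e = a e.1 * b e.2 :=
  rfl

variable [Fintype X] [Fintype Y]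

/-- A colouring `c` of the coordinates splits a space `T` of vectors if `T` is spanned by vectors
supported in single colour classes, with at most one such vector per class. -/
def SplitsInto {E : Type*} [Fintype E] (c : E → κ) (T : Submodule K (E → K)) : Prop :=
  (∀ k, Module.finrank K (colourPart c T k) ≤ 1) ∧ ⨆ k, colourPart c T k = T

lemma SplitsInto.indicator_mem {E : Type*} [Fintype E] {c : E → κ} {T : Submodule K (E → K)}
    (h : SplitsInto c T) {ω : E → K} (hω : ω ∈ T) (k : κ) :
    (c ⁻¹' {k}).indicator ω ∈ colourPart c T k :=
  indicator_mem_of_mem_iSup_colourPart (h.2.symm ▸ hω) k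

lemma SplitsInto.mul_eq_mul {E : Type*} [Fintype E] {c : E → κ} {T : Submodule K (E → K)}
    (h : SplitsInto c T) {σ τ : E → K} (hσ : σ ∈ T) (hτ : τ ∈ T) {e f : E} (hef : c e = c f) :
    σ e * τ f = σ f * τ e := by
  have hprop := mul_eq_mul_of_finrank_le_one (h.1 (c f)) (h.indicator_mem hσ (c f))
    (h.indicator_mem hτ (c f)) e f
  have he : e ∈ c ⁻¹' {c f} := hef
  have hf : f ∈ c ⁻¹' {c f} := rfl
  simpa only [Set.indicator_of_mem he, Set.indicator_of_mem hf] using hprop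

variable {c : X × Y → κ} {T : Submodule K (X × Y → K)} {a : X → K} {B : Submodule K (Y → K)}

lemma SplitsInto.snd_eq_of_colour_eq (h : SplitsInto c T) (ha : ∀ i, a i ≠ 0)
    (hB : ∀ j, ∃ b ∈ B, ∀ j', b j' = 0 ↔ j' = j) (hBT : B.map (outerProduct a) ≤ T)
    {e f : X × Y} (hef : c e = c f) : e.2 = f.2 := by
  by_contra hne
  obtain ⟨b, hb, hb0⟩ := hB e.2
  obtain ⟨b', hb', hb0'⟩ := hB f.2
  have hprop := h.mul_eq_mul (hBT ⟨b, hb, rfl⟩) (hBT ⟨b', hb', rfl⟩) hef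
  simp only [outerProduct_apply, (hb0 e.2).mpr rfl, mul_zero, zero_mul] at hprop
  exact mul_ne_zero (mul_ne_zero (ha f.1) (mt (hb0 f.2).mp (Ne.symm hne)))
    (mul_ne_zero (ha e.1) (mt (hb0' e.2).mp hne)) hprop.symm

lemma SplitsInto.single_notMem [DecidableEq X] [DecidableEq Y] [Nontrivial Y]
    (h : SplitsInto c T) (ha : ∀ i, a i ≠ 0) (hB : ∀ j, ∃ b ∈ B, ∀ j', b j' = 0 ↔ j' = j)
    (hBT : B.map (outerProduct a) ≤ T) {i i' : X} {j : Y} (hi : i' ≠ i)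
    (hc : c (i', j) = c (i, j)) : Pi.single (i, j) 1 ∉ T := fun hsingle => by
  obtain ⟨j', hj'⟩ := exists_ne j
  obtain ⟨b, hb, hb0⟩ := hB j'
  have hprop := h.mul_eq_mul hsingle (hBT ⟨b, hb, rfl⟩) hc
  simp only [outerProduct_apply, Pi.single_apply, Prod.mk.injEq, hi, false_and, if_false,
    if_true, zero_mul, one_mul] at hprop
  exact mul_ne_zero (ha i') (mt (hb0 j).mp hj'.symm) hprop.symm

lemma SplitsInto.ne_map_outerProduct [DecidableEq Y] [Nonempty X] [Nontrivial Y]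
    (h : SplitsInto c T) (ha : ∀ i, a i ≠ 0) (hB : ∀ j, ∃ b ∈ B, ∀ j', b j' = 0 ↔ j' = j)
    (hsingle : ∀ j, Pi.single j 1 ∉ B) : T ≠ B.map (outerProduct a) := by
  rintro rfl
  obtain ⟨i⟩ := ‹Nonempty X›
  obtain ⟨j, j', hj⟩ := exists_pair_ne Y
  obtain ⟨b, hb, hb0⟩ := hB j'
  have hmem := (h.indicator_mem ⟨b, hb, rfl⟩ (c (i, j))).2
  obtain ⟨b', hb', heq⟩ := hmem
  have hrow (l : Y) := congrFun heq (i, l)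
  have hj' : b' j = b j := mul_left_cancel₀ (ha i) <|
    (hrow j).trans (Set.indicator_of_mem (show (i, j) ∈ c ⁻¹' {c (i, j)} from rfl) _)
  have hoff (l : Y) (hl : l ≠ j) : b' l = 0 := by
    have hcol : (i, l) ∉ c ⁻¹' {c (i, j)} := fun hcol =>
      hl (h.snd_eq_of_colour_eq ha hB le_rfl hcol)
    exact (mul_eq_zero.mp ((hrow l).trans (Set.indicator_of_notMem hcol _))).resolve_left (ha i)
  refine hsingle j ?_
  have hscale : (b' j)⁻¹ • b' = Pi.single j 1 := by
    funext l
    rcases eq_or_ne l j with rfl | hl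
    · simp [inv_mul_cancel₀ (hj' ▸ mt (hb0 l).mp hj : b' l ≠ 0)]
    · simp [hoff l hl, hl]
  exact hscale ▸ Submodule.smul_mem _ _ hb'

end ProductColourings

section CompleteBipartiteGraphs

variable {V X Y : Type*} {d : ℕ}

/-- The edge of a complete bipartite graph with sides `X` and `Y`, whose vertices are placed in
`V` by `g`. -/
def bipartiteEdge (g : X ⊕ Y → V) (e : X × Y) : Sym2 V :=
  s(g (Sum.inl e.1), g (Sum.inr e.2))

lemma bipartiteEdge_injective {g : X ⊕ Y → V} (hg : Function.Injective g) :
    Function.Injective (bipartiteEdge g) := by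
  rintro ⟨i, j⟩ ⟨i', j'⟩ h
  simpa [bipartiteEdge, hg.eq_iff] using h

lemma not_isDiag_bipartiteEdge {g : X ⊕ Y → V} (hg : Function.Injective g) (e : X × Y) :
    ¬ (bipartiteEdge g e).IsDiag := by
  simp [bipartiteEdge, hg.eq_iff]

variable [DecidableEq V] [Fintype X] [Fintype Y]

/-- The combination of the rows of the rigidity matrix of a bipartite graph with given
coefficients. Its kernel is the space of equilibrium stresses of the framework. -/
noncomputable def stressMap (p : V → Fin d → ℝ) (g : X ⊕ Y → V) :
    (X × Y → ℝ) →ₗ[ℝ] (V × Fin d → ℝ) :=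
  Fintype.linearCombination ℝ fun e => rigRow d p (bipartiteEdge g e)

variable {p : V → Fin d → ℝ} {g : X ⊕ Y → V} {ω : X × Y → ℝ}

lemma stressMap_apply (w : V) (a : Fin d) :
    stressMap p g ω (w, a) =
      ∑ i, (if w = g (Sum.inl i) then 1 else 0) *
        ∑ j, ω (i, j) * (p (g (Sum.inl i)) a - p (g (Sum.inr j)) a) -
      ∑ j, (if w = g (Sum.inr j) then 1 else 0) *
        ∑ i, ω (i, j) * (p (g (Sum.inl i)) a - p (g (Sum.inr j)) a) := by
  simp only [stressMap, Fintype.linearCombination_apply, Finset.sum_apply, Pi.smul_apply,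
    smul_eq_mul, rigRow, bipartiteEdge, Sym2.lift_mk, Finset.mul_sum, Fintype.sum_prod_type]
  rw [Finset.sum_comm (s := (Finset.univ : Finset Y)), ← Finset.sum_sub_distrib]
  refine Finset.sum_congr rfl fun i _ => ?_
  rw [← Finset.sum_sub_distrib]
  exact Finset.sum_congr rfl fun j _ => by ring

lemma stressMap_apply_inl (hg : Function.Injective g) (i : X) (a : Fin d) :
    stressMap p g ω (g (Sum.inl i), a) =
      ∑ j, ω (i, j) * (p (g (Sum.inl i)) a - p (g (Sum.inr j)) a) := by
  classical
  simp [stressMap_apply, hg.eq_iff]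

lemma stressMap_apply_inr (hg : Function.Injective g) (j : Y) (a : Fin d) :
    stressMap p g ω (g (Sum.inr j), a) =
      -∑ i, ω (i, j) * (p (g (Sum.inl i)) a - p (g (Sum.inr j)) a) := by
  classical
  simp [stressMap_apply, hg.eq_iff]

lemma stressMap_apply_of_notMem_range {w : V} (hw : w ∉ Set.range g) (a : Fin d) :
    stressMap p g ω (w, a) = 0 := by
  have hne (v : X ⊕ Y) : w ≠ g v := fun h => hw ⟨v, h.symm⟩
  simp [stressMap_apply, hne]

lemma mem_ker_stressMap_of_mem_affineDeps
    (hrow : ∀ i, (fun j => ω (i, j)) ∈ affineDeps (p ∘ g ∘ Sum.inr))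
    (hcol : ∀ j, (fun i => ω (i, j)) ∈ affineDeps (p ∘ g ∘ Sum.inl)) :
    ω ∈ LinearMap.ker (stressMap p g) := by
  simp only [mem_affineDeps_iff_sum_eq_zero, Function.comp_apply] at hrow hcol
  funext ⟨w, a⟩
  simp [stressMap_apply, mul_sub, ← Finset.sum_mul, hrow, hcol]

lemma outerProduct_mem_ker_stressMap {a : X → ℝ} {b : Y → ℝ}
    (ha : a ∈ affineDeps (p ∘ g ∘ Sum.inl)) (hb : b ∈ affineDeps (p ∘ g ∘ Sum.inr)) :
    outerProduct a b ∈ LinearMap.ker (stressMap p g) := by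
  refine mem_ker_stressMap_of_mem_affineDeps (fun i => Submodule.smul_mem _ (a i) hb) fun j => ?_
  exact (funext fun i => mul_comm (a i) (b j)) ▸ Submodule.smul_mem _ (b j) ha

/-- Pairs a load at the vertex `w` with the position of `w`, from the left if `w` lies in `X` and
from the right, with the opposite sign, if `w` lies in `Y`. -/
noncomputable def loadPairing (p : V → Fin d → ℝ) (g : X ⊕ Y → V) :
    X ⊕ Y → (Fin (d + 1) → ℝ) →ₗ[ℝ] Matrix (Fin (d + 1)) (Fin (d + 1)) ℝ :=
  Sum.elim (fun i => vecMulVecBilin ℝ ℝ (homogenize (p (g (Sum.inl i)))))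
    fun j => -(vecMulVecBilin ℝ ℝ).flip (homogenize (p (g (Sum.inr j))))

/-- The linear map underlying Bolker and Roth's computation of the stresses of complete bipartite
frameworks, which sends the row of the edge `xy` to `x̂ x̂ᵀ - ŷ ŷᵀ`. -/
noncomputable def bolkerRothMap (p : V → Fin d → ℝ) (g : X ⊕ Y → V) :
    (V × Fin d → ℝ) →ₗ[ℝ] Matrix (Fin (d + 1)) (Fin (d + 1)) ℝ :=
  ∑ w, loadPairing p g w ∘ₗ
    LinearMap.pi (Matrix.vecCons 0 fun a => LinearMap.proj (g w, a))

lemma bolkerRothMap_rigRow (hg : Function.Injective g) (v w : X ⊕ Y) :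
    bolkerRothMap p g (rigRow d p s(g v, g w)) =
      loadPairing p g v (homogenize (p (g v)) - homogenize (p (g w))) -
        loadPairing p g w (homogenize (p (g v)) - homogenize (p (g w))) := by
  classical
  have hload (u : X ⊕ Y) :
      LinearMap.pi (R := ℝ) (φ := fun _ => ℝ)
        (Matrix.vecCons 0 fun a => LinearMap.proj (g u, a)) (rigRow d p s(g v, g w)) =
      ((if u = v then (1 : ℝ) else 0) - if u = w then 1 else 0) •
        (homogenize (p (g v)) - homogenize (p (g w))) := by
    funext a
    refine Fin.cases ?_ (fun i => ?_) a <;> simp [rigRow, homogenize, hg.eq_iff]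
  simp only [bolkerRothMap, LinearMap.sum_apply, LinearMap.comp_apply, hload, map_smul]
  simp only [sub_smul, Finset.sum_sub_distrib, ite_smul, one_smul, zero_smul, Finset.sum_ite_eq',
    Finset.mem_univ, if_true]

lemma bolkerRothMap_rigRow_inl (hg : Function.Injective g) (i i' : X) :
    bolkerRothMap p g (rigRow d p s(g (Sum.inl i), g (Sum.inl i'))) =
      Matrix.vecMulVec (homogenize (p (g (Sum.inl i))) - homogenize (p (g (Sum.inl i'))))
        (homogenize (p (g (Sum.inl i))) - homogenize (p (g (Sum.inl i')))) := by
  rw [bolkerRothMap_rigRow hg, Matrix.sub_vecMulVec]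
  rfl

lemma bolkerRothMap_rigRow_inr (hg : Function.Injective g) (j j' : Y) :
    bolkerRothMap p g (rigRow d p s(g (Sum.inr j), g (Sum.inr j'))) =
      -Matrix.vecMulVec (homogenize (p (g (Sum.inr j))) - homogenize (p (g (Sum.inr j'))))
        (homogenize (p (g (Sum.inr j))) - homogenize (p (g (Sum.inr j')))) := by
  rw [bolkerRothMap_rigRow hg, Matrix.vecMulVec_sub, neg_sub]
  change -Matrix.vecMulVec _ _ - -Matrix.vecMulVec _ _ = _
  exact neg_sub_neg _ _

lemma bolkerRothMap_rigRow_bipartiteEdge (hg : Function.Injective g) (e : X × Y) :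
    bolkerRothMap p g (rigRow d p (bipartiteEdge g e)) =
      Matrix.vecMulVec (homogenize (p (g (Sum.inl e.1)))) (homogenize (p (g (Sum.inl e.1)))) -
      Matrix.vecMulVec (homogenize (p (g (Sum.inr e.2)))) (homogenize (p (g (Sum.inr e.2)))) := by
  rw [bipartiteEdge, bolkerRothMap_rigRow hg]
  simp only [loadPairing, Sum.elim_inl, Sum.elim_inr, LinearMap.neg_apply, LinearMap.flip_apply,
    vecMulVecBilin_apply_apply, Matrix.vecMulVec_sub, Matrix.sub_vecMulVec]
  abel

/-- The coefficients of the Veronese points of the vertices in the image of `stressMap p g ω`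
under `bolkerRothMap p g`. -/
def signedMarginals (ω : X × Y → ℝ) : X ⊕ Y → ℝ :=
  Sum.elim (fun i => ∑ j, ω (i, j)) fun j => -∑ i, ω (i, j)

lemma bolkerRothMap_stressMap (hg : Function.Injective g) (ω : X × Y → ℝ) :
    bolkerRothMap p g (stressMap p g ω) = ∑ w, signedMarginals ω w •
      Matrix.vecMulVec (homogenize (p (g w))) (homogenize (p (g w))) := by
  simp only [stressMap, Fintype.linearCombination_apply, map_sum, map_smul,
    bolkerRothMap_rigRow_bipartiteEdge hg, smul_sub, Finset.sum_sub_distrib, signedMarginals,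
    Fintype.sum_sum_type, Sum.elim_inl, Sum.elim_inr, neg_smul, Finset.sum_neg_distrib,
    ← sub_eq_add_neg, Finset.sum_smul, Fintype.sum_prod_type]
  rw [Finset.sum_comm (s := (Finset.univ : Finset Y))]

lemma sum_smul_veronese_two_eq {R W ι : Type*} [CommRing R] [Fintype W] {f : W → R}
    {z : W → ι → R} {c : R} {y : ι → R}
    (h : ∑ w, f w • Matrix.vecMulVec (z w) (z w) = c • Matrix.vecMulVec y y) :
    ∑ w, f w • veronese 2 (z w) = c • veronese 2 y := by
  funext s
  obtain ⟨a, s, rfl⟩ := s.exists_eq_cons_of_succ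
  obtain ⟨b, s, rfl⟩ := s.exists_eq_cons_of_succ
  rw [s.eq_nil_of_card_zero]
  have hab := congrFun (congrFun h a) b
  simp only [Matrix.sum_apply, Matrix.smul_apply, Matrix.vecMulVec_apply] at hab
  simpa only [Finset.sum_apply, Pi.smul_apply, veronese_two] using hab

lemma Generic.signedMarginals_eq_zero (hp : Generic d p) (hg : Function.Injective g)
    (hcard : Fintype.card (X ⊕ Y) ≤ (d + 2).choose 2)
    (hω : ω ∈ LinearMap.ker (stressMap p g)) : signedMarginals ω = 0 := by
  have hzero := bolkerRothMap_stressMap (p := p) hg ω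
  rw [LinearMap.mem_ker.mp hω, map_zero, ← zero_smul ℝ (Matrix.vecMulVec 0 0)] at hzero
  have hver := sum_smul_veronese_two_eq hzero.symm
  rw [zero_smul] at hver
  exact funext (Fintype.linearIndependent_iff.mp
    ((hp.comp hg).linearIndependent_veronese hcard) _ hver)

lemma Generic.row_mem_affineDeps (hp : Generic d p) (hg : Function.Injective g)
    (hcard : Fintype.card (X ⊕ Y) ≤ (d + 2).choose 2)
    (hω : ω ∈ LinearMap.ker (stressMap p g)) (i : X) :
    (fun j => ω (i, j)) ∈ affineDeps (p ∘ g ∘ Sum.inr) := by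
  have hsum : ∑ j, ω (i, j) = 0 :=
    congrFun (hp.signedMarginals_eq_zero hg hcard hω) (Sum.inl i)
  refine mem_affineDeps_iff_sum_eq_zero.mpr ⟨hsum, fun a => ?_⟩
  have hload := congrFun (LinearMap.mem_ker.mp hω) (g (Sum.inl i), a)
  simpa [stressMap_apply_inl hg, mul_sub, ← Finset.sum_mul, hsum] using hload

lemma Generic.column_mem_affineDeps (hp : Generic d p) (hg : Function.Injective g)
    (hcard : Fintype.card (X ⊕ Y) ≤ (d + 2).choose 2)
    (hω : ω ∈ LinearMap.ker (stressMap p g)) (j : Y) :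
    (fun i => ω (i, j)) ∈ affineDeps (p ∘ g ∘ Sum.inl) := by
  have hsum : ∑ i, ω (i, j) = 0 := neg_eq_zero.mp <|
    congrFun (hp.signedMarginals_eq_zero hg hcard hω) (Sum.inr j)
  refine mem_affineDeps_iff_sum_eq_zero.mpr ⟨hsum, fun a => ?_⟩
  have hload := congrFun (LinearMap.mem_ker.mp hω) (g (Sum.inr j), a)
  simpa [stressMap_apply_inr hg, mul_sub, ← Finset.sum_mul, hsum] using hload

lemma Generic.ker_stressMap_eq_map_outerProduct (hp : Generic d p) (hg : Function.Injective g)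
    (hcard : Fintype.card (X ⊕ Y) ≤ (d + 2).choose 2) (hX : Fintype.card X = d + 2)
    {a : X → ℝ} (ha : a ∈ affineDeps (p ∘ g ∘ Sum.inl)) (hne : a ≠ 0) :
    LinearMap.ker (stressMap p g) = (affineDeps (p ∘ g ∘ Sum.inr)).map (outerProduct a) := by
  refine le_antisymm (fun ω hω => ?_) (Submodule.map_le_iff_le_comap.mpr fun b hb =>
    outerProduct_mem_ker_stressMap ha hb)
  obtain ⟨i₀, hi₀⟩ := Function.ne_iff.mp hne
  refine ⟨(a i₀)⁻¹ • fun j => ω (i₀, j),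
    Submodule.smul_mem _ _ (hp.row_mem_affineDeps hg hcard hω i₀), funext fun ⟨i, j⟩ => ?_⟩
  have hprop := (hp.comp (hg.comp Sum.inl_injective)).mul_eq_mul_of_mem_affineDeps hX.le ha
    (hp.column_mem_affineDeps hg hcard hω j) i i₀
  change a i * ((a i₀)⁻¹ * ω (i₀, j)) = ω (i, j)
  field_simp [show a i₀ ≠ 0 from hi₀]
  linear_combination hprop

lemma Generic.mem_range_of_rigRow_mem_range (hp : Generic d p) (hd : 0 < d) {u v : V}
    (huv : u ≠ v) (hmem : rigRow d p s(u, v) ∈ LinearMap.range (stressMap p g)) :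
    u ∈ Set.range g := by
  by_contra hu
  obtain ⟨ω, hω⟩ := hmem
  have hload := congrFun hω (u, ⟨0, hd⟩)
  rw [stressMap_apply_of_notMem_range hu] at hload
  simp [rigRow, huv, eq_comm, sub_eq_zero, hp.coord_ne huv] at hload

lemma Generic.mem_range_bipartiteEdge_of_rigRow_mem_range (hp : Generic d p)
    (hg : Function.Injective g) (hd : 0 < d) (hcard : Fintype.card (X ⊕ Y) < (d + 2).choose 2)
    {e : Sym2 V} (he : ¬ e.IsDiag) (hmem : rigRow d p e ∈ LinearMap.range (stressMap p g)) :
    e ∈ Set.range (bipartiteEdge g) := by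
  induction e with | h u v => ?_
  have huv : u ≠ v := he
  obtain ⟨a, rfl⟩ := hp.mem_range_of_rigRow_mem_range hd huv hmem
  obtain ⟨b, rfl⟩ := hp.mem_range_of_rigRow_mem_range hd huv.symm (Sym2.eq_swap ▸ hmem)
  obtain ⟨ω, hω⟩ := hmem
  have hΘ := bolkerRothMap_stressMap (p := p) hg ω
  rw [hω] at hΘ
  have hab : a ≠ b := fun h => huv (congrArg g h)
  have hscalar {c : ℝ} (h : bolkerRothMap p g (rigRow d p s(g a, g b)) =
      c • Matrix.vecMulVec (homogenize (p (g a)) - homogenize (p (g b)))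
        (homogenize (p (g a)) - homogenize (p (g b)))) : c = 0 :=
    (hp.comp hg).eq_zero_of_sum_veronese_eq_smul hd hcard hab
      (sum_smul_veronese_two_eq (hΘ.symm.trans h))
  rcases a with i | j <;> rcases b with i' | j'
  · exact absurd (hscalar (c := 1) (by rw [bolkerRothMap_rigRow_inl hg, one_smul])) one_ne_zero
  · exact ⟨(i, j'), rfl⟩
  · exact ⟨(i', j), Sym2.eq_swap⟩
  · exact absurd (hscalar (c := -1) (by rw [bolkerRothMap_rigRow_inr hg, neg_one_smul]))
      (neg_ne_zero.mpr one_ne_zero)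

end CompleteBipartiteGraphs

section NullityBound

variable {V X Y κ : Type*} [DecidableEq V] [Fintype X] [Fintype Y] {d : ℕ}
  {p : V → Fin d → ℝ} {g : X ⊕ Y → V}

lemma rigRow_eq_zero_of_isDiag {e : Sym2 V} (he : e.IsDiag) : rigRow d p e = 0 := by
  induction e with | h u v => ?_
  obtain rfl : u = v := he
  exact funext fun _ => by simp [rigRow]

lemma card_sum_lt_choose_two (hd : 4 ≤ d) (hX : Fintype.card X = d + 2)
    (hY : Fintype.card Y = d + 3) : Fintype.card (X ⊕ Y) < (d + 2).choose 2 := by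
  have hsix : 6 ≤ d.choose 2 := Nat.choose_le_choose 2 hd
  simp only [Fintype.card_sum, hX, hY, Nat.choose_succ_succ' _ 1, Nat.choose_one_right]
  lia

/-- The preimage of the span of the rows indexed by `Z`: the coefficient vectors of the edges of
the bipartite graph which are stresses modulo `Z`. -/
noncomputable def stressesModulo (p : V → Fin d → ℝ) (g : X ⊕ Y → V) (Z : Set (Sym2 V)) :
    Submodule ℝ (X × Y → ℝ) :=
  (Submodule.span ℝ (rigRow d p '' Z)).comap (stressMap p g)

lemma ker_stressMap_le_stressesModulo (Z : Set (Sym2 V)) :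
    LinearMap.ker (stressMap p g) ≤ stressesModulo p g Z :=
  LinearMap.ker_le_comap _

lemma single_mem_stressesModulo [DecidableEq X] [DecidableEq Y] {Z : Set (Sym2 V)} {e : X × Y}
    (he : bipartiteEdge g e ∈ Z) : Pi.single e 1 ∈ stressesModulo p g Z := by
  rw [stressesModulo, Submodule.mem_comap, stressMap, Fintype.linearCombination_apply_single,
    one_smul]
  exact Submodule.subset_span ⟨_, he, rfl⟩

lemma Generic.finrank_ker_stressMap_le_two (hp : Generic d p) (hg : Function.Injective g)
    (hd : 4 ≤ d) (hX : Fintype.card X = d + 2) (hY : Fintype.card Y = d + 3) :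
    Module.finrank ℝ (LinearMap.ker (stressMap p g)) ≤ 2 := by
  obtain ⟨a, ha, hne⟩ := (hp.comp (hg.comp Sum.inl_injective)).exists_mem_affineDeps_ne_zero hX
  have : Nonempty X := Fintype.card_pos_iff.mp (by lia)
  rw [hp.ker_stressMap_eq_map_outerProduct hg (card_sum_lt_choose_two hd hX hY).le hX ha
    fun h => hne (Classical.arbitrary X) (congrFun h _)]
  refine (Submodule.finrank_map_le _ _).trans ?_
  have := (hp.comp (hg.comp Sum.inr_injective)).finrank_affineDeps_le (by lia)
  lia

lemma Generic.not_splitsInto_of_span_le_range (hp : Generic d p) (hg : Function.Injective g)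
    (hd : 4 ≤ d) (hX : Fintype.card X = d + 2) (hY : Fintype.card Y = d + 3) {c : X × Y → κ}
    (hc : ∀ e : X × Y, ∃ i ≠ e.1, c (i, e.2) = c e) {Z : Set (Sym2 V)}
    (hZ : Submodule.span ℝ (rigRow d p '' Z) ≤ LinearMap.range (stressMap p g)) :
    ¬ SplitsInto c (stressesModulo p g Z) := by
  classical
  intro hsplit
  have hcard := card_sum_lt_choose_two hd hX hY
  have : Nonempty X := Fintype.card_pos_iff.mp (by lia)
  have : Nontrivial Y := Fintype.one_lt_card_iff_nontrivial.mp (by lia)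
  obtain ⟨a, ha, hne⟩ := (hp.comp (hg.comp Sum.inl_injective)).exists_mem_affineDeps_ne_zero hX
  have hker := hp.ker_stressMap_eq_map_outerProduct hg hcard.le hX ha
    fun h => hne (Classical.arbitrary X) (congrFun h _)
  have hB := (hp.comp (hg.comp Sum.inr_injective)).exists_mem_affineDeps_eq_zero_iff hY
  have hrow : ∀ e ∈ Z, rigRow d p e = 0 := by
    intro e he
    by_contra hrow
    obtain ⟨⟨i, j⟩, rfl⟩ := hp.mem_range_bipartiteEdge_of_rigRow_mem_range hg (by lia) hcard
      (mt rigRow_eq_zero_of_isDiag hrow) (hZ (Submodule.subset_span ⟨e, he, rfl⟩))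
    obtain ⟨i', hi', hcolour⟩ := hc (i, j)
    exact hsplit.single_notMem hne hB (hker ▸ ker_stressMap_le_stressesModulo Z) hi' hcolour
      (single_mem_stressesModulo he)
  refine hsplit.ne_map_outerProduct hne hB
    (hp.comp (hg.comp Sum.inr_injective)).single_notMem_affineDeps (hker ▸ ?_)
  rw [stressesModulo, Submodule.span_eq_bot.mpr (Set.forall_mem_image.mpr hrow)]
  rfl

lemma rrk_mono [Fintype V] {F F' : Set (Sym2 V)} (h : F ⊆ F') : rrk d p F ≤ rrk d p F' :=
  Submodule.finrank_mono (Submodule.span_mono (Set.image_mono h))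

lemma rrk_union_image_bipartiteEdge_add [Fintype V] (p : V → Fin d → ℝ) (g : X ⊕ Y → V)
    (Z : Set (Sym2 V)) (s : Finset (X × Y)) :
    rrk d p (Z ∪ bipartiteEdge g '' s) +
        Module.finrank ℝ ↥(supportedOn ℝ (s : Set (X × Y)) ⊓ stressesModulo p g Z) =
      rrk d p Z + s.card := by
  have hmap : (supportedOn ℝ (s : Set (X × Y))).map (stressMap p g) =
      Submodule.span ℝ (rigRow d p '' (bipartiteEdge g '' s)) := by
    rw [stressMap, map_linearCombination_supportedOn, Set.image_image]
  have hdim := finrank_sup_map_add_finrank_inf_comap (stressMap p g)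
    (supportedOn ℝ (s : Set (X × Y))) (Submodule.span ℝ (rigRow d p '' Z))
  rwa [hmap, finrank_supportedOn, ← Submodule.span_union, ← Set.image_union] at hdim

theorem Generic.sum_half_finrank_colourPart_le [Fintype V] [Fintype κ] (hp : Generic d p)
    (hg : Function.Injective g) (hd : 4 ≤ d) (hX : Fintype.card X = d + 2)
    (hY : Fintype.card Y = d + 3) {c : X × Y → κ}
    (hc : ∀ e : X × Y, ∃ i ≠ e.1, c (i, e.2) = c e) (Z : Set (Sym2 V)) :
    ∑ k, (Module.finrank ℝ (colourPart c (stressesModulo p g Z) k) + 1) / 2 ≤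
      rrk d p Z + 1 := by
  by_contra! hlt
  have hker := hp.finrank_ker_stressMap_le_two hg hd hX hY
  have hdim := finrank_comap_eq (stressMap p g) (Submodule.span ℝ (rigRow d p '' Z))
  have hinf := Submodule.finrank_mono
    (inf_le_left : Submodule.span ℝ (rigRow d p '' Z) ⊓ LinearMap.range (stressMap p g) ≤ _)
  change Module.finrank ℝ (stressesModulo p g Z) = _ at hdim
  change _ ≤ rrk d p Z at hinf
  have hsplit : SplitsInto c (stressesModulo p g Z) := finrank_le_one_and_iSup_eq_of_finrank_le
    (iSupIndep_colourPart c _) (fun _ => inf_le_right) (by lia)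
  have hhalf : ∑ k, (Module.finrank ℝ (colourPart c (stressesModulo p g Z) k) + 1) / 2 ≤
      Module.finrank ℝ (stressesModulo p g Z) := by
    conv_rhs => rw [← hsplit.2, finrank_iSup_eq_sum_of_iSupIndep (iSupIndep_colourPart c _)]
    exact Finset.sum_le_sum fun k _ => by lia
  refine hp.not_splitsInto_of_span_le_range hg hd hX hY hc (inf_eq_left.mp ?_) hsplit
  exact Submodule.eq_of_le_of_finrank_le inf_le_left (by change rrk d p Z ≤ _; lia)

end NullityBound

section PairedEdges

variable {V I Y κ : Type*} [DecidableEq V] [Fintype I] [Fintype Y] [DecidableEq I]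
  [DecidableEq Y] {d : ℕ} {p : V → Fin d → ℝ} {g : (I × Bool) ⊕ Y → V}

/-- The pairs `(i, false) j`, `(i, true) j` of edges of the complete bipartite graph with sides
`I × Bool` and `Y`, for `(i, j)` in `Q`. -/
def twinEdges (Q : Finset (I × Y)) : Finset ((I × Bool) × Y) :=
  Finset.univ.filter fun e => (e.1.1, e.2) ∈ Q

lemma mem_twinEdges {Q : Finset (I × Y)} {e : (I × Bool) × Y} :
    e ∈ twinEdges Q ↔ (e.1.1, e.2) ∈ Q := by
  simp [twinEdges]

lemma card_twinEdges (Q : Finset (I × Y)) : (twinEdges Q).card = 2 * Q.card := by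
  have hbij : (twinEdges Q).card = (Q ×ˢ (Finset.univ : Finset Bool)).card :=
    Finset.card_nbij' (fun e => ((e.1.1, e.2), e.1.2)) (fun q => ((q.1.1, q.2), q.1.2))
      (fun _ he => by simpa [mem_twinEdges] using he)
      (fun _ hq => by simpa [mem_twinEdges] using hq)
      (fun _ _ => rfl) fun _ _ => rfl
  rw [hbij, Finset.card_product, Finset.card_univ, Fintype.card_bool, mul_comm]

/-- The two edges of `K_V` over `q = (i, j)`, joining the vertices `(i, false)` and `(i, true)`
to `j`. -/
def edgePair (g : (I × Bool) ⊕ Y → V) (q : I × Y) : Finset (Sym2 V) :=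
  (twinEdges {q}).image (bipartiteEdge g)

lemma coe_edgePair (g : (I × Bool) ⊕ Y → V) (q : I × Y) :
    (edgePair g q : Set (Sym2 V)) = bipartiteEdge g '' twinEdges {q} :=
  Finset.coe_image

lemma biUnion_edgePair (g : (I × Bool) ⊕ Y → V) (Q : Finset (I × Y)) :
    ⋃ q ∈ Q, (edgePair g q : Set (Sym2 V)) = bipartiteEdge g '' twinEdges Q := by
  simp only [coe_edgePair, ← Set.image_iUnion₂]
  congr 1
  ext e
  simp [mem_twinEdges]

lemma card_edgePair (hg : Function.Injective g) (q : I × Y) : (edgePair g q).card = 2 := by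
  rw [edgePair, Finset.card_image_of_injective _ (bipartiteEdge_injective hg), card_twinEdges,
    Finset.card_singleton]

lemma not_isDiag_of_mem_edgePair (hg : Function.Injective g) {q : I × Y} {e : Sym2 V}
    (he : e ∈ edgePair g q) : ¬ e.IsDiag := by
  obtain ⟨f, -, rfl⟩ := Finset.mem_image.mp he
  exact not_isDiag_bipartiteEdge hg f

lemma disjoint_edgePair (hg : Function.Injective g) {q q' : I × Y} (hq : q ≠ q') :
    Disjoint (edgePair g q) (edgePair g q') := by
  refine (Finset.disjoint_image (bipartiteEdge_injective hg)).mpr ?_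
  refine Finset.disjoint_left.mpr fun e he he' => hq ?_
  rw [mem_twinEdges, Finset.mem_singleton] at he he'
  exact he.symm.trans he'

lemma edgePair_injective (hg : Function.Injective g) : Function.Injective (edgePair g) := by
  intro q q' h
  by_contra hq
  have hempty : edgePair g q = ∅ := Finset.disjoint_self_iff_empty _ |>.mp (by
    simpa only [← h] using disjoint_edgePair hg hq)
  simpa [hempty] using card_edgePair hg q

variable [Fintype V]

theorem Generic.card_add_two_le_of_rrk_eq (hp : Generic d p) (hg : Function.Injective g)
    (hX : Fintype.card (I × Bool) = d + 2) (hY : Fintype.card Y = d + 3) {Q : Finset (I × Y)}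
    (hQ : rrk d p (⋃ q ∈ Q, (edgePair g q : Set (Sym2 V))) = 2 * Q.card) :
    Q.card + 2 ≤ Fintype.card (I × Y) := by
  by_contra! hlt
  have : Nonempty (I × Bool) := Fintype.card_pos_iff.mp (by lia)
  have : Nontrivial Y := Fintype.one_lt_card_iff_nontrivial.mp (by lia)
  have : Nonempty I := ⟨(Classical.arbitrary (I × Bool)).1⟩
  obtain ⟨q₀, hq₀⟩ := Finset.card_le_one_iff_subset_singleton.mp
    (show Qᶜ.card ≤ 1 by rw [Finset.card_compl]; lia)
  obtain ⟨a, ha, ha0⟩ :=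
    (hp.comp (hg.comp Sum.inl_injective)).exists_mem_affineDeps_ne_zero hX
  obtain ⟨b, hb, hb0⟩ :=
    (hp.comp (hg.comp Sum.inr_injective)).exists_mem_affineDeps_eq_zero_iff hY q₀.2
  have hindep : supportedOn ℝ (twinEdges Q : Set ((I × Bool) × Y)) ⊓ stressesModulo p g ∅ = ⊥ := by
    have hrank := rrk_union_image_bipartiteEdge_add p g ∅ (twinEdges Q)
    rw [Set.empty_union, ← biUnion_edgePair, hQ, card_twinEdges] at hrank
    have hempty : rrk d p ∅ = 0 := by
      rw [rrk, Set.image_empty, Submodule.span_empty, finrank_bot]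
    exact Submodule.finrank_eq_zero.mp (by lia)
  have hmem : outerProduct a b ∈ (⊥ : Submodule ℝ ((I × Bool) × Y → ℝ)) := by
    refine hindep ▸ ⟨mem_supportedOn.mpr fun e he => ?_, ker_stressMap_le_stressesModulo ∅
      (outerProduct_mem_ker_stressMap ha hb)⟩
    have hq : (e.1.1, e.2) = q₀ := by simpa using hq₀ (by simpa [mem_twinEdges] using he)
    rw [outerProduct_apply, (hb0 e.2).mpr (congrArg Prod.snd hq), mul_zero]
  obtain ⟨j, hj⟩ := exists_ne q₀.2
  exact mul_ne_zero (ha0 (Classical.arbitrary _)) (mt (hb0 j).mp hj)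
    (congrFun hmem (Classical.arbitrary _, j))

theorem Generic.card_le_rrk_add_sum [Fintype κ] (hp : Generic d p) (hg : Function.Injective g)
    (hd : 4 ≤ d) (hX : Fintype.card (I × Bool) = d + 2) (hY : Fintype.card Y = d + 3)
    (Z : Set (Sym2 V)) (F : κ → Set (Sym2 V)) {colour : I × Y → κ}
    (hF : ∀ q, (edgePair g q : Set (Sym2 V)) ⊆ F (colour q)) :
    Fintype.card (I × Y) ≤
      rrk d p Z + 1 + ∑ k, (rrk d p (Z ∪ F k) - rrk d p Z) / 2 := by
  classical
  let c : (I × Bool) × Y → κ := fun e => colour (e.1.1, e.2)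
  have hclass (k : κ) : (Finset.univ.filter (colour · = k)).card ≤
      (rrk d p (Z ∪ F k) - rrk d p Z) / 2 +
        (Module.finrank ℝ (colourPart c (stressesModulo p g Z) k) + 1) / 2 := by
    have hrank := rrk_union_image_bipartiteEdge_add p g Z
      (twinEdges (Finset.univ.filter (colour · = k)))
    have hfibre : (twinEdges (Finset.univ.filter (colour · = k)) : Set ((I × Bool) × Y)) =
        c ⁻¹' {k} := by
      ext e
      simp [mem_twinEdges, c]
    have hsub : bipartiteEdge g '' twinEdges (Finset.univ.filter (colour · = k)) ⊆ F k := by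
      rw [← biUnion_edgePair]
      exact Set.iUnion₂_subset fun q hq => (Finset.mem_filter.mp hq).2 ▸ hF q
    have hmono := rrk_mono (p := p) (Set.union_subset_union_right Z hsub)
    rw [card_twinEdges, hfibre] at hrank
    rw [hfibre] at hmono
    change _ + Module.finrank ℝ (colourPart c (stressesModulo p g Z) k) = _ at hrank
    lia
  have htwin : ∀ e : (I × Bool) × Y, ∃ i ≠ e.1, c (i, e.2) = c e := fun e =>
    ⟨(e.1.1, !e.1.2), fun h => by simpa using congrArg Prod.snd h, rfl⟩
  have hnull := hp.sum_half_finrank_colourPart_le hg hd hX hY htwin Z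
  calc Fintype.card (I × Y)
      = ∑ k, (Finset.univ.filter (colour · = k)).card :=
        Finset.card_eq_sum_card_fiberwise fun q _ => Finset.mem_coe.mpr (Finset.mem_univ (colour q))
    _ ≤ ∑ k, (rrk d p (Z ∪ F k) - rrk d p Z) / 2 +
          ∑ k, (Module.finrank ℝ (colourPart c (stressesModulo p g Z) k) + 1) / 2 := by
        rw [← Finset.sum_add_distrib]
        exact Finset.sum_le_sum fun k _ => hclass k
    _ ≤ _ := by lia

end PairedEdges

theorem Rd_no_matroid_matching_property_general {V : Type*} [Fintype V] [DecidableEq V] {m : ℕ}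
    (hm : 2 ≤ m) (hV : 4 * m + 5 ≤ Fintype.card V) {p : V → Fin (2 * m) → ℝ}
    (hp : Generic (2 * m) p) :
    ∃ H : Finset (Finset (Sym2 V)),
      (∀ P ∈ H, P.card = 2 ∧ ∀ e ∈ P, ¬ e.IsDiag) ∧
      (∀ P ∈ H, ∀ Q ∈ H, P ≠ Q → P ∩ Q = ∅) ∧
      ∀ (Z : Set (Sym2 V)) (t : ℕ) (Hpart : Fin t → Finset (Finset (Sym2 V))),
        H ⊆ Finset.univ.sup Hpart →
      ∀ Hm ⊆ H, rrk (2 * m) p (⋃ P ∈ Hm, (P : Set (Sym2 V))) = 2 * Hm.card →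
        Hm.card < rrk (2 * m) p Z +
          ∑ i, (rrk (2 * m) p (Z ∪ ⋃ P ∈ Hpart i, (P : Set (Sym2 V))) - rrk (2 * m) p Z) / 2 := by
  obtain ⟨⟨g, hg⟩⟩ : Nonempty ((Fin (m + 1) × Bool) ⊕ Fin (2 * m + 3) ↪ V) :=
    Function.Embedding.nonempty_of_card_le (by simp; lia)
  have hX : Fintype.card (Fin (m + 1) × Bool) = 2 * m + 2 := by simp; lia
  have hY : Fintype.card (Fin (2 * m + 3)) = 2 * m + 3 := Fintype.card_fin _
  refine ⟨Finset.univ.image (edgePair g), ?_, ?_, fun Z t Hpart hcover Hm hHm hrank => ?_⟩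
  · exact Finset.forall_mem_image.mpr fun q _ =>
      ⟨card_edgePair hg q, fun e he => not_isDiag_of_mem_edgePair hg he⟩
  · refine Finset.forall_mem_image.mpr fun q _ => Finset.forall_mem_image.mpr fun q' _ hne => ?_
    exact (disjoint_edgePair hg fun h => hne (congrArg _ h)).eq_bot
  obtain ⟨Q, -, rfl⟩ := Finset.subset_image_iff.mp hHm
  rw [Finset.card_image_of_injective Q (edgePair_injective hg)] at hrank ⊢
  have hmatching := hp.card_add_two_le_of_rrk_eq hg hX hY (Q := Q)
    (by rwa [← Finset.set_biUnion_finset_image])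
  have hpart (q) : ∃ i, edgePair g q ∈ Hpart i := by
    simpa using hcover (Finset.mem_image_of_mem _ (Finset.mem_univ q))
  choose colour hcolour using hpart
  have hbound := hp.card_le_rrk_add_sum hg (by lia) hX hY Z
    (fun i => ⋃ P ∈ Hpart i, (P : Set (Sym2 V)))
    fun q => Set.subset_biUnion_of_mem (u := fun P : Finset (Sym2 V) => (P : Set (Sym2 V)))
      (hcolour q)
  lia

/-- Proposition 3.18: `R_{2m}(K_n)` does not have the matroid matching property,
for `m ≥ 2` and `n ≥ 4m+5`. -/
theorem Rd_no_matroid_matching_property (m n : ℕ) (hm : 2 ≤ m) (hn : 4*m + 5 ≤ n)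
    (p : Fin n → Fin (2*m) → ℝ) (hp : Generic (2*m) p) :
    ∃ H : Finset (Finset (Sym2 (Fin n))),
      (∀ P ∈ H, P.card = 2 ∧ ∀ e ∈ P, ¬ e.IsDiag) ∧
      (∀ P ∈ H, ∀ Q ∈ H, P ≠ Q → P ∩ Q = ∅) ∧
      ∀ Z : Finset (Sym2 (Fin n)), rcl (2*m) p ↑Z = ↑Z →
      ∀ t : ℕ, ∀ Hpart : Fin t → Finset (Finset (Sym2 (Fin n))),
        (∀ i j, i ≠ j → Disjoint (Hpart i) (Hpart j)) → Finset.univ.sup Hpart = H →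
      ∀ Hm ⊆ H, rrk (2*m) p (⋃ P ∈ (Hm : Set (Finset (Sym2 (Fin n)))), (P : Set (Sym2 (Fin n)))) = 2 * Hm.card →
        Hm.card < rrk (2*m) p ↑Z +
          ∑ i : Fin t,
            (rrk (2*m) p ((Z : Set (Sym2 (Fin n))) ∪
                ⋃ P ∈ ((Hpart i : Finset (Finset (Sym2 (Fin n)))) : Set (Finset (Sym2 (Fin n)))), (P : Set (Sym2 (Fin n)))) -
              rrk (2*m) p ↑Z) / 2 := by
  obtain ⟨H, hpair, hdisj, hlt⟩ := Rd_no_matroid_matching_property_general hm (by simpa) hp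
  exact ⟨H, hpair, hdisj, fun Z _ t Hpart _ hsup => hlt Z t Hpart hsup.ge⟩
end
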